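/- arXiv:1901.06951 — 2 statements merged into one kernel-verified Lean document; each statement's English description precedes it below -/
import Mathlib

section
/- Assume V ∈ C¹(ℝ^N) satisfies (V1) and (V2). If c ∈ [0, ν₀) is such that condition (V^c) holds, then the coercivity condition (1.7) holds; consequently there exists q_c ∈ C²(ℝ, ℝ^N) with q̈_c(t) = ∇V(q_c(t)) for all t ∈ ℝ, inf_{t∈ℝ} dist(q_c(t), 𝒱^c₋) = 0, inf_{t∈ℝ} dist(q_c(t), 𝒱^c₊) = 0, and ½|q̇_c(t)|² − V(q_c(t)) = −c for all t ∈ ℝ. -/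
open MeasureTheory Filter Metric Set Topology
open scoped ENNReal

noncomputable section

/-- Euclidean space `ℝ^N`. -/
abbrev Euc (N : ℕ) := EuclideanSpace ℝ (Fin N)

/-- Distance between two subsets of a metric space. -/
def setDist {E : Type*} [PseudoMetricSpace E] (A B : Set E) : ℝ :=
  sInf ((fun p : E × E => dist p.1 p.2) '' (A ×ˢ B))

/-- `q ∈ H¹_loc(ℝ, ℝ^N)` with derivative `q'`: `q` is locally absolutely continuous with
locally square-integrable derivative `q'`. -/
def IsH1loc {N : ℕ} (q q' : ℝ → Euc N) : Prop :=
  LocallyIntegrable q' volume ∧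
  (∀ a b : ℝ, IntegrableOn (fun t => ‖q' t‖ ^ 2) (Icc a b) volume) ∧
  (∀ a b : ℝ, q b - q a = ∫ t in a..b, q' t)

/-- The action `J_{c,I}(q) = ∫_I (½|q̇(t)|² + (V(q(t)) − c)) dt`, valued in `[0,+∞]`. -/
def lagJ {N : ℕ} (V : Euc N → ℝ) (c : ℝ) (q q' : ℝ → Euc N) (I : Set ℝ) : ℝ≥0∞ :=
  ∫⁻ t in I, ENNReal.ofReal (2⁻¹ * ‖q' t‖ ^ 2 + (V (q t) - c))

/-- The admissible class `Γ_c` of pairs (function, derivative): `q ∈ H¹_loc`,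
`V(q(t)) ≥ c` for all `t`, `liminf_{t→−∞} dist(q(t),𝒱⁻) = 0` and
`liminf_{t→+∞} dist(q(t),𝒱⁺) = 0`. -/
def Gamma {N : ℕ} (V : Euc N → ℝ) (c : ℝ) (Vm Vp : Set (Euc N)) :
    Set ((ℝ → Euc N) × (ℝ → Euc N)) :=
  {p | IsH1loc p.1 p.2 ∧ (∀ t, c ≤ V (p.1 t)) ∧
    (∀ ε > 0, ∃ᶠ t in atBot, infDist (p.1 t) Vm < ε) ∧
    (∀ ε > 0, ∃ᶠ t in atTop, infDist (p.1 t) Vp < ε)}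

/-- `m_c := inf_{q ∈ Γ_c} J_c(q)`. -/
def mc {N : ℕ} (V : Euc N → ℝ) (c : ℝ) (Vm Vp : Set (Euc N)) : ℝ≥0∞ :=
  ⨅ (p) (_ : p ∈ Gamma V c Vm Vp), lagJ V c p.1 p.2 univ

/-- Coercivity condition (1.7) for the constant `R`. -/
def Coercive {N : ℕ} (V : Euc N → ℝ) (c : ℝ) (Vm Vp : Set (Euc N)) (R : ℝ) : Prop :=
  mc V c Vm Vp =
    ⨅ (p) (_ : p ∈ Gamma V c Vm Vp) (_ : ∀ t, ‖p.1 t‖ ≤ R), lagJ V c p.1 p.2 univ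


namespace DW

variable {N : ℕ}

/-- Core regularity: finite action curves. -/
structure Core (W : Euc N → ℝ) (q u : ℝ → Euc N) : Prop where
  meas : AEStronglyMeasurable u volume
  int : Integrable (fun t => 2⁻¹ * ‖u t‖ ^ 2 + W (q t)) volume
  ftc : ∀ a b : ℝ, q b - q a = ∫ t in a..b, u t

/-- Admissible curves. -/
structure Adm (W : Euc N → ℝ) (Zm Zp : Set (Euc N)) (q u : ℝ → Euc N) : Prop
    extends Core W q u where
  left : ∀ ε > 0, ∃ᶠ t in atBot, infDist (q t) Zm < ε
  right : ∀ ε > 0, ∃ᶠ t in atTop, infDist (q t) Zp < ε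

/-- The action. -/
def J (W : Euc N → ℝ) (q u : ℝ → Euc N) : ℝ := ∫ t, (2⁻¹ * ‖u t‖ ^ 2 + W (q t))

lemma cont_of_ftc {q u : ℝ → Euc N} (hu : ∀ a b : ℝ, IntervalIntegrable u volume a b)
    (h : ∀ a b : ℝ, q b - q a = ∫ t in a..b, u t) : Continuous q := by
  have : q = fun t => q 0 + ∫ s in (0:ℝ)..t, u s := by
    funext t; rw [← h 0 t]; abel
  rw [this]
  exact continuous_const.add (intervalIntegral.continuous_primitive hu 0)

section
variable {W : Euc N → ℝ} {q u : ℝ → Euc N}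

lemma Core.intU (hW0 : ∀ x, 0 ≤ W x) (h : Core W q u) : Integrable (fun t => ‖u t‖ ^ 2) volume := by
  refine (h.int.const_mul 2).mono' (h.meas.norm.pow 2) (Eventually.of_forall fun t => ?_)
  have := hW0 (q t)
  rw [Real.norm_of_nonneg (by positivity)]
  linarith

lemma Core.memLp (hW0 : ∀ x, 0 ≤ W x) (h : Core W q u) : MemLp u 2 volume :=
  (memLp_two_iff_integrable_sq_norm h.meas).2 (h.intU hW0)

lemma Core.locInt (hW0 : ∀ x, 0 ≤ W x) (h : Core W q u) (a b : ℝ) : IntervalIntegrable u volume a b :=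
  (((h.memLp hW0).locallyIntegrable (by norm_num)).integrableOn_isCompact
    isCompact_uIcc).intervalIntegrable

lemma Core.cont (hW0 : ∀ x, 0 ≤ W x) (h : Core W q u) : Continuous q := cont_of_ftc (h.locInt hW0) h.ftc

lemma Core.intW (hW0 : ∀ x, 0 ≤ W x) (h : Core W q u) : Integrable (fun t => W (q t)) volume := by
  have := h.int.sub ((h.intU hW0).const_mul 2⁻¹)
  refine this.congr (Eventually.of_forall fun t => ?_)
  simp

lemma Core.J_eq (hW0 : ∀ x, 0 ≤ W x) (h : Core W q u) : J W q u = 2⁻¹ * (∫ t, ‖u t‖ ^ 2) + ∫ t, W (q t) := by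
  unfold J
  rw [integral_add ((h.intU hW0).const_mul _) (h.intW hW0), integral_const_mul]

lemma Core.affine (hW0 : ∀ x, 0 ≤ W x) (h : Core W q u) {l : ℝ} (hl : l ≠ 0) (k : ℝ) :
    Core W (fun t => q (l * t + k)) (fun t => l • u (l * t + k)) ∧
    J W (fun t => q (l * t + k)) (fun t => l • u (l * t + k)) =
      |l⁻¹| * (2⁻¹ * l ^ 2 * (∫ t, ‖u t‖ ^ 2) + ∫ t, W (q t)) := by
  have hI : ∀ f : ℝ → ℝ, Integrable f volume → Integrable (fun t => f (l * t + k)) volume := by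
    intro f hf
    exact (hf.comp_add_right k).comp_mul_left' hl
  have hE : ∀ f : ℝ → ℝ, ∫ t, f (l * t + k) = |l⁻¹| * ∫ t, f t := by
    intro f
    have h1 := Measure.integral_comp_mul_left (fun t => f (t + k)) l
    rw [h1, integral_add_right_eq_self (fun t => f t) k, smul_eq_mul]
  have i1 := hI _ (h.intU hW0)
  have i2 := hI _ (h.intW hW0)
  have hc : Core W (fun t => q (l * t + k)) (fun t => l • u (l * t + k)) := by
    refine ⟨?_, ?_, ?_⟩
    · refine AEStronglyMeasurable.const_smul ?_ l
      have h1 : Measure.QuasiMeasurePreserving (fun t : ℝ => l * t + k) volume volume := by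
        refine (measurePreserving_add_right volume k).quasiMeasurePreserving.comp ?_
        refine ⟨by fun_prop, ?_⟩
        rw [Real.map_volume_mul_left hl]
        exact Measure.smul_absolutelyContinuous
      exact h.meas.comp_quasiMeasurePreserving h1
    · refine ((i1.const_mul (2⁻¹ * l ^ 2)).add i2).congr (Eventually.of_forall fun t => ?_)
      simp only [Pi.add_apply, norm_smul, mul_pow, Real.norm_eq_abs, sq_abs]
      ring
    · intro a b
      rw [intervalIntegral.integral_smul, h.ftc, intervalIntegral.smul_integral_comp_mul_add]
  refine ⟨hc, ?_⟩
  rw [hc.J_eq hW0, hE (fun t => W (q t))]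
  have : (fun t => ‖l • u (l * t + k)‖ ^ 2) = fun t => l ^ 2 * ‖u (l * t + k)‖ ^ 2 := by
    funext t
    simp only [norm_smul, mul_pow, Real.norm_eq_abs, sq_abs]
  rw [this, integral_const_mul, hE (fun t => ‖u t‖ ^ 2)]
  ring

lemma Adm.scale (hW0 : ∀ x, 0 ≤ W x) {Zm Zp : Set (Euc N)} (h : Adm W Zm Zp q u) {l : ℝ} (hl : 0 < l) (k : ℝ) :
    Adm W Zm Zp (fun t => q (l * t + k)) (fun t => l • u (l * t + k)) := by
  have key : ∀ (s : ℝ), l * ((s - k) / l) + k = s := fun s => by field_simp; ring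
  refine ⟨(h.toCore.affine hW0 hl.ne' k).1, fun ε hε => ?_, fun ε hε => ?_⟩
  · have ht : Tendsto (fun s : ℝ => (s - k) / l) atBot atBot :=
      (tendsto_atBot_add_const_right _ (-k) tendsto_id).atBot_div_const hl
    refine ht.frequently ((h.left ε hε).mono fun s hs => ?_)
    simpa only [key] using hs
  · have ht : Tendsto (fun s : ℝ => (s - k) / l) atTop atTop :=
      (tendsto_atTop_add_const_right _ (-k) tendsto_id).atTop_div_const hl
    refine ht.frequently ((h.right ε hε).mono fun s hs => ?_)
    simpa only [key] using hs

lemma Adm.translate (hW0 : ∀ x, 0 ≤ W x) {Zm Zp : Set (Euc N)} (h : Adm W Zm Zp q u) (k : ℝ) :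
    Adm W Zm Zp (fun t => q (t + k)) (fun t => u (t + k)) ∧
    J W (fun t => q (t + k)) (fun t => u (t + k)) = J W q u := by
  have h1 := h.scale hW0 one_pos k
  have h2 := (h.toCore.affine hW0 one_ne_zero k).2
  simp only [one_mul, one_smul] at h1 h2
  refine ⟨h1, h2.trans ?_⟩
  rw [h.toCore.J_eq hW0]; norm_num

lemma Adm.reverse (hW0 : ∀ x, 0 ≤ W x) {Zm Zp : Set (Euc N)} (h : Adm W Zm Zp q u) :
    Adm W Zp Zm (fun t => q (-t)) (fun t => - u (-t)) ∧
    J W (fun t => q (-t)) (fun t => - u (-t)) = J W q u := by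
  have h2 := (h.toCore.affine hW0 (l := -1) (by norm_num) 0)
  simp only [neg_mul, one_mul, add_zero, neg_smul, one_smul] at h2
  refine ⟨⟨h2.1, fun ε hε => ?_, fun ε hε => ?_⟩, h2.2.trans ?_⟩
  · refine tendsto_neg_atTop_atBot.frequently ((h.right ε hε).mono fun s hs => ?_)
    simpa using hs
  · refine tendsto_neg_atBot_atTop.frequently ((h.left ε hε).mono fun s hs => ?_)
    simpa using hs
  · rw [h.toCore.J_eq hW0]; norm_num

/-- crossing lemma for continuous real functions -/
lemma crossing {f : ℝ → ℝ} (hf : Continuous f) {t0 t1 a b : ℝ} (h01 : t0 ≤ t1) (hab : a ≤ b)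
    (h0 : f t0 ≤ a) (h1 : b ≤ f t1) :
    ∃ s0 s1, t0 ≤ s0 ∧ s0 ≤ s1 ∧ s1 ≤ t1 ∧ f s0 = a ∧ f s1 = b ∧
      ∀ s ∈ Icc s0 s1, a ≤ f s ∧ f s ≤ b := by
  -- first time reaching b
  have hc1 : IsCompact (Icc t0 t1 ∩ f ⁻¹' (Ici b)) :=
    isCompact_Icc.inter_right (isClosed_Ici.preimage hf)
  obtain ⟨s1, ⟨hs1, hs1b⟩, hmin⟩ := hc1.exists_isLeast ⟨t1, ⟨h01, le_rfl⟩, h1⟩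
  have hb : f s1 = b := by
    refine le_antisymm ?_ hs1b
    by_contra hlt
    push Not at hlt
    obtain ⟨s, hs, hsb⟩ := intermediate_value_Icc hs1.1 hf.continuousOn
      (show b ∈ Icc (f t0) (f s1) from ⟨h0.trans hab, hlt.le⟩)
    have := hmin ⟨⟨hs.1, hs.2.trans hs1.2⟩, hsb.ge⟩
    have : s = s1 := le_antisymm hs.2 this
    subst this; linarith
  have hlt1 : ∀ s ∈ Icc t0 s1, f s ≤ b := by
    intro s hs
    by_contra hlt
    push Not at hlt
    have h2 := hmin ⟨⟨hs.1, hs.2.trans hs1.2⟩, hlt.le⟩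
    have : s = s1 := le_antisymm hs.2 h2
    subst this; linarith
  have hc0 : IsCompact (Icc t0 s1 ∩ f ⁻¹' (Iic a)) :=
    isCompact_Icc.inter_right (isClosed_Iic.preimage hf)
  obtain ⟨s0, ⟨hs0, hs0a⟩, hmax⟩ := hc0.exists_isGreatest ⟨t0, ⟨le_rfl, hs1.1⟩, h0⟩
  have hge : ∀ s ∈ Icc s0 s1, s ≠ s0 → a < f s := by
    intro s hs hne
    by_contra hlt
    push Not at hlt
    exact hne (le_antisymm (hmax ⟨⟨hs0.1.trans hs.1, hs.2⟩, hlt⟩) hs.1)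
  have ha : f s0 = a := by
    refine le_antisymm hs0a ?_
    obtain ⟨s, hs, hsa⟩ := intermediate_value_Icc hs0.2 hf.continuousOn
      (show a ∈ Icc (f s0) (f s1) from ⟨hs0a, hab.trans_eq hb.symm⟩)
    by_cases hss : s = s0
    · subst hss; exact hsa.ge
    · have := hge s hs hss; linarith
  refine ⟨s0, s1, hs0.1, hs0.2, hs1.2, ha, hb, fun s hs => ⟨?_, hlt1 s ⟨hs0.1.trans hs.1, hs.2⟩⟩⟩
  by_cases hss : s = s0
  · subst hss; exact ha.ge
  · exact (hge s hs hss).le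

/-- action lower bound -/
lemma Core.cost (hW0 : ∀ x, 0 ≤ W x) (h : Core W q u) {s0 s1 η : ℝ} (h01 : s0 ≤ s1) (hη : 0 ≤ η)
    (hge : ∀ s ∈ Icc s0 s1, η ≤ W (q s)) :
    Real.sqrt (2 * η) * ‖q s1 - q s0‖ ≤ ∫ t in Ioc s0 s1, (2⁻¹ * ‖u t‖ ^ 2 + W (q t)) := by
  rw [h.ftc, intervalIntegral.integral_of_le h01]
  have hi : IntegrableOn u (Ioc s0 s1) volume := (h.locInt hW0 s0 s1).1
  calc Real.sqrt (2 * η) * ‖∫ t in Ioc s0 s1, u t‖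
      ≤ Real.sqrt (2 * η) * ∫ t in Ioc s0 s1, ‖u t‖ := by
        gcongr; exact norm_integral_le_integral_norm _
    _ = ∫ t in Ioc s0 s1, Real.sqrt (2 * η) * ‖u t‖ := by rw [integral_const_mul]
    _ ≤ _ := by
        refine setIntegral_mono_on (hi.norm.const_mul _) h.int.integrableOn measurableSet_Ioc ?_
        intro t ht
        have h1 := hge t ⟨ht.1.le, ht.2⟩
        have h2 := Real.sq_sqrt (show 0 ≤ 2 * η by positivity)
        nlinarith [sq_nonneg (Real.sqrt (2 * η) - ‖u t‖)]

lemma Core.setInt_le (hW0 : ∀ x, 0 ≤ W x) (h : Core W q u) {s t : Set ℝ} (hst : s ⊆ t) :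
    ∫ t in s, (2⁻¹ * ‖u t‖ ^ 2 + W (q t)) ≤ ∫ t in t, (2⁻¹ * ‖u t‖ ^ 2 + W (q t)) := by
  refine setIntegral_mono_set h.int.integrableOn (Eventually.of_forall fun x => ?_)
    (Eventually.of_forall hst)
  have := hW0 (q x)
  positivity

end

/-- The abstract two-well structure. -/
structure Wells {N : ℕ} (W : Euc N → ℝ) (Zm Zp : Set (Euc N)) (d : ℝ) : Prop where
  cont : Continuous W
  nonneg : ∀ x, 0 ≤ W x
  zero : ∀ x, W x = 0 ↔ x ∈ Zm ∪ Zp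
  cm : IsCompact Zm
  cp : IsCompact Zp
  nm : Zm.Nonempty
  np : Zp.Nonempty
  dpos : 0 < d
  sep : ∀ x ∈ Zm, ∀ y ∈ Zp, d ≤ dist x y
  coer : ∃ ρ η : ℝ, 0 < η ∧ ∀ x, ρ ≤ ‖x‖ → η ≤ W x

section
variable {N : ℕ} {W : Euc N → ℝ} {Zm Zp : Set (Euc N)} {d : ℝ}

lemma Wells.symm (w : Wells W Zm Zp d) : Wells W Zp Zm d where
  cont := w.cont
  nonneg := w.nonneg
  zero := fun x => by rw [w.zero, union_comm]
  cm := w.cp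
  cp := w.cm
  nm := w.np
  np := w.nm
  dpos := w.dpos
  sep := fun x hx y hy => by rw [dist_comm]; exact w.sep y hy x hx
  coer := w.coer

lemma Wells.sum_infDist (w : Wells W Zm Zp d) (x : Euc N) :
    d ≤ infDist x Zm + infDist x Zp := by
  obtain ⟨y, hy, hy'⟩ := w.cm.exists_infDist_eq_dist w.nm x
  obtain ⟨z, hz, hz'⟩ := w.cp.exists_infDist_eq_dist w.np x
  rw [hy', hz', dist_comm x y]
  exact (w.sep y hy z hz).trans (dist_triangle _ _ _)

lemma Wells.pos_on (w : Wells W Zm Zp d) {K : Set (Euc N)} (hK : IsCompact K)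
    (hd : ∀ x ∈ K, x ∉ Zm ∪ Zp) : ∃ η > 0, ∀ x ∈ K, η ≤ W x := by
  rcases K.eq_empty_or_nonempty with rfl | hne
  · exact ⟨1, one_pos, by simp⟩
  · obtain ⟨x, hx, hmin⟩ := hK.exists_isMinOn hne w.cont.continuousOn
    refine ⟨W x, lt_of_le_of_ne (w.nonneg x) fun h => hd x hx ((w.zero x).1 h.symm), fun y hy => ?_⟩
    exact hmin hy

lemma mem_of_infDist_zero {Z : Set (Euc N)} (hc : IsCompact Z) (hn : Z.Nonempty) {x : Euc N}
    (h : infDist x Z ≤ 0) : x ∈ Z := by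
  rw [hc.isClosed.mem_iff_infDist_zero hn]
  exact le_antisymm h infDist_nonneg

/-- positivity of `W` on the bounded region away from both wells -/
lemma Wells.pos_away (w : Wells W Zm Zp d) (R r : ℝ) (hr : 0 < r) : ∃ η > 0, ∀ x, ‖x‖ ≤ R →
    r ≤ infDist x Zm → r ≤ infDist x Zp → η ≤ W x := by
  have hK : IsCompact (closedBall (0 : Euc N) R ∩ ({x | r ≤ infDist x Zm} ∩
      {x | r ≤ infDist x Zp})) := by
    refine (isCompact_closedBall _ _).inter_right (IsClosed.inter ?_ ?_)
    · exact isClosed_le continuous_const (continuous_infDist_pt _)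
    · exact isClosed_le continuous_const (continuous_infDist_pt _)
  obtain ⟨η, hη, h⟩ := w.pos_on hK (by
    rintro x ⟨-, h1, h2⟩ (h | h)
    · have := infDist_zero_of_mem h; simp only [mem_ofPred_eq] at h1; linarith
    · have := infDist_zero_of_mem h; simp only [mem_ofPred_eq] at h2; linarith)
  exact ⟨η, hη, fun x h1 h2 h3 => h x ⟨by simpa using h1, h2, h3⟩⟩

lemma Wells.near (w : Wells W Zm Zp d) {κ : ℝ} (hκ : 0 < κ) :
    ∃ r > 0, ∀ x, infDist x Zm < r → ∃ y ∈ Zm, ∃ B, (∀ z ∈ segment ℝ y x, W z ≤ B) ∧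
      2⁻¹ * ‖x - y‖ ^ 2 + B < κ := by
  have ho : IsOpen {x | W x < κ / 2} := isOpen_lt w.cont continuous_const
  have hs : Zm ⊆ {x | W x < κ / 2} := fun x hx => by
    have : W x = 0 := (w.zero x).2 (Or.inl hx)
    simp only [mem_ofPred_eq, this]; positivity
  obtain ⟨δ, hδ, hsub⟩ := w.cm.exists_thickening_subset_open ho hs
  refine ⟨min δ (Real.sqrt κ), lt_min hδ (Real.sqrt_pos.2 hκ), fun x hx => ?_⟩
  obtain ⟨y, hy, hy'⟩ := w.cm.exists_infDist_eq_dist w.nm x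
  rw [hy'] at hx
  refine ⟨y, hy, κ / 2, fun z hz => ?_, ?_⟩
  · have : z ∈ thickening δ Zm := by
      rw [mem_thickening_iff]
      refine ⟨y, hy, lt_of_le_of_lt ?_ (hx.trans_le (min_le_left _ _))⟩
      rw [dist_comm z y, dist_comm x y]
      rw [segment_eq_image'] at hz
      obtain ⟨θ, hθ, rfl⟩ := hz
      rw [dist_eq_norm, dist_eq_norm]
      simp only [sub_add_cancel_left, norm_neg, norm_smul]
      rw [norm_sub_rev y x, Real.norm_of_nonneg hθ.1]
      exact mul_le_of_le_one_left (norm_nonneg _) hθ.2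
    exact (hsub this).le
  · have h1 := hx.trans_le (min_le_right _ _)
    rw [dist_eq_norm] at h1
    have h2 := Real.sq_sqrt hκ.le
    have h3 : ‖x - y‖ ^ 2 < Real.sqrt κ ^ 2 := by
      have := norm_nonneg (x - y)
      gcongr
    linarith

lemma Wells.bound (w : Wells W Zm Zp d) (M : ℝ) : ∃ R > 0, ∀ q u, Adm W Zm Zp q u →
    J W q u ≤ M → ∀ t, ‖q t‖ ≤ R := by
  obtain ⟨ρ, η, hη, hW⟩ := w.coer
  obtain ⟨ρ1, hρ1⟩ := w.cm.isBounded.exists_norm_le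
  set ρ' := max ρ (ρ1 + 1) with hρ'
  have hsq : 0 < Real.sqrt (2 * η) := Real.sqrt_pos.2 (by positivity)
  set R := max ρ' 0 + (|M| + 1) / Real.sqrt (2 * η) with hR
  have hpos : 0 < (|M| + 1) / Real.sqrt (2 * η) := by positivity
  have hRρ : ρ' ≤ R := by have := le_max_left ρ' 0; linarith
  refine ⟨R, by have := le_max_right ρ' 0; linarith, fun q u h hJ t => ?_⟩
  by_contra hlt
  push Not at hlt
  obtain ⟨t0, ht0, hd⟩ := (Filter.frequently_atBot.1 (h.left 1 one_pos)) t
  have h0 : ‖q t0‖ ≤ ρ' := by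
    obtain ⟨y, hy, hy'⟩ := (infDist_lt_iff w.nm).1 hd
    have := hρ1 y hy
    have h2 := norm_le_norm_add_norm_sub' (q t0) y
    rw [dist_eq_norm] at hy'
    refine le_trans ?_ (le_max_right _ _)
    linarith
  obtain ⟨s0, s1, -, h01, -, e0, e1, hs⟩ := crossing (h.toCore.cont w.nonneg).norm ht0 hRρ h0 hlt.le
  have hc := h.toCore.cost w.nonneg h01 hη.le (fun s hs' => hW _ ((le_max_left _ _).trans (hs s hs').1))
  have h1 := h.toCore.setInt_le w.nonneg (subset_univ (Ioc s0 s1))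
  rw [setIntegral_univ] at h1
  have h2 : R - ρ' ≤ ‖q s1 - q s0‖ := by
    rw [← e0, ← e1]; exact norm_sub_norm_le _ _
  have h3 : Real.sqrt (2 * η) * ((|M| + 1) / Real.sqrt (2 * η)) ≤ M := by
    refine le_trans ?_ ((hc.trans h1).trans hJ)
    gcongr
    have := le_max_left ρ' 0; linarith
  rw [mul_div_cancel₀ _ hsq.ne'] at h3
  have := le_abs_self M
  linarith

lemma Wells.surgery (w : Wells W Zm Zp d) {q u : ℝ → Euc N} (h : Core W q u)
    (hr : ∀ ε > 0, ∃ᶠ t in atTop, infDist (q t) Zp < ε) (t0 : ℝ) {y : Euc N} (hy : y ∈ Zm) {B : ℝ}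
    (hB : ∀ z ∈ segment ℝ y (q t0), W z ≤ B) :
    ∃ q1 u1, Adm W Zm Zp q1 u1 ∧
      J W q1 u1 ≤ 2⁻¹ * ‖q t0 - y‖ ^ 2 + B + ∫ t in Ioi t0, (2⁻¹ * ‖u t‖ ^ 2 + W (q t)) := by
  set v := q t0 - y with hv
  set u1 : ℝ → Euc N := fun t => (Ioi t0).indicator u t + (Ioc (t0 - 1) t0).indicator (fun _ => v) t
    with hu1
  have hmem : MemLp u1 2 volume := by
    refine ((h.memLp w.nonneg).indicator measurableSet_Ioi).add ?_
    exact memLp_indicator_const _ measurableSet_Ioc _ (Or.inr (by simp))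
  have hii : ∀ a b, IntervalIntegrable u1 volume a b := fun a b =>
    ((hmem.locallyIntegrable (by norm_num)).integrableOn_isCompact isCompact_uIcc).intervalIntegrable
  set q1 : ℝ → Euc N := fun t => q t0 + ∫ s in t0..t, u1 s with hq1
  have ftc : ∀ a b : ℝ, q1 b - q1 a = ∫ t in a..b, u1 t := by
    intro a b
    simp only [hq1]
    rw [← intervalIntegral.integral_interval_sub_left (hii t0 b) (hii t0 a)]
    abel
  have hcont : Continuous q1 := cont_of_ftc hii ftc
  have ur : ∀ t, t0 < t → u1 t = u t := by
    intro t ht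
    have h1 : t ∉ Ioc (t0 - 1) t0 := fun h => by linarith [h.2]
    simp [hu1, ht, h1]
  have um : ∀ t ∈ Ioc (t0 - 1) t0, u1 t = v := by
    intro t ht
    have h1 : t ∉ Ioi t0 := fun h => by have := ht.2; simp at h; linarith
    simp only [hu1, indicator_of_mem ht, indicator_of_notMem h1, zero_add]
  have ul : ∀ t, t ≤ t0 - 1 → u1 t = 0 := by
    intro t ht
    have h1 : t ∉ Ioi t0 := fun h => by simp at h; linarith
    have h2 : t ∉ Ioc (t0 - 1) t0 := fun h => by linarith [h.1]
    simp only [hu1, indicator_of_notMem h2, indicator_of_notMem h1, zero_add]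
  have qr : ∀ t, t0 ≤ t → q1 t = q t := by
    intro t ht
    have : ∫ s in t0..t, u1 s = ∫ s in t0..t, u s := by
      rw [intervalIntegral.integral_of_le ht, intervalIntegral.integral_of_le ht]
      exact setIntegral_congr_fun measurableSet_Ioc fun s hs => ur s hs.1
    simp only [hq1, this, ← h.ftc]; abel
  have qm : ∀ t ∈ Icc (t0 - 1) t0, q1 t = y + (t - t0 + 1) • v := by
    intro t ht
    have : ∫ s in t0..t, u1 s = ∫ s in t0..t, v := by
      rw [intervalIntegral.integral_of_ge ht.2, intervalIntegral.integral_of_ge ht.2]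
      congr 1
      exact setIntegral_congr_fun measurableSet_Ioc fun s hs => um s ⟨ht.1.trans_lt hs.1, hs.2⟩
    simp only [hq1, this, intervalIntegral.integral_const, add_smul, one_smul]
    rw [hv]; abel
  have ql : ∀ t, t ≤ t0 - 1 → q1 t = y := by
    intro t ht
    have h1 := ftc (t0 - 1) t
    have : ∫ s in (t0 - 1)..t, u1 s = 0 := by
      rw [intervalIntegral.integral_of_ge ht]
      rw [setIntegral_congr_fun measurableSet_Ioc (g := fun _ => 0) fun s hs => ul s hs.2]
      simp
    rw [this, qm (t0 - 1) ⟨le_rfl, by linarith⟩] at h1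
    have h2 := sub_eq_zero.1 h1
    rw [h2]; simp
  set e1 : ℝ → ℝ := fun t => 2⁻¹ * ‖u1 t‖ ^ 2 + W (q1 t) with he1
  have hWy : W y = 0 := (w.zero y).2 (Or.inl hy)
  have el : ∀ t ∈ Iic (t0 - 1), e1 t = 0 := fun t ht => by
    simp [he1, ul t ht, ql t ht, hWy]
  have em : ∀ t ∈ Ioc (t0 - 1) t0, e1 t ≤ 2⁻¹ * ‖v‖ ^ 2 + B := fun t ht => by
    have : W (q1 t) ≤ B := by
      apply hB
      rw [qm t ⟨ht.1.le, ht.2⟩, segment_eq_image']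
      exact ⟨t - t0 + 1, ⟨by linarith [ht.1], by linarith [ht.2]⟩, rfl⟩
    simp only [he1, um t ht]; linarith
  have er : ∀ t ∈ Ioi t0, e1 t = 2⁻¹ * ‖u t‖ ^ 2 + W (q t) := fun t ht => by
    simp only [he1, ur t ht, qr t (le_of_lt ht)]
  have il : IntegrableOn e1 (Iic (t0 - 1)) volume :=
    (integrableOn_congr_fun el measurableSet_Iic).2 integrableOn_zero
  have im : IntegrableOn e1 (Ioc (t0 - 1) t0) volume := by
    have hc : IntegrableOn (fun t => 2⁻¹ * ‖v‖ ^ 2 + W (q1 t)) (Ioc (t0 - 1) t0) volume :=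
      (Continuous.integrableOn_Icc
        (continuous_const.add (w.cont.comp hcont))).mono_set Ioc_subset_Icc_self
    exact hc.congr_fun (fun t ht => by simp only [he1, um t ht]) measurableSet_Ioc
  have ir : IntegrableOn e1 (Ioi t0) volume :=
    (integrableOn_congr_fun er measurableSet_Ioi).2 h.int.integrableOn
  have u1' : Iic (t0 - 1) ∪ Ioc (t0 - 1) t0 = Iic t0 := Iic_union_Ioc_eq_Iic (by linarith)
  have ilm : IntegrableOn e1 (Iic t0) volume := by rw [← u1']; exact il.union im
  have hInteg : Integrable e1 volume := by
    rw [← integrableOn_univ, ← Iic_union_Ioi (a := t0)]; exact ilm.union ir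
  refine ⟨q1, u1, ⟨⟨hmem.1, hInteg, ftc⟩, ?_, ?_⟩, ?_⟩
  · intro ε hε
    refine Eventually.frequently ?_
    filter_upwards [eventually_le_atBot (t0 - 1)] with t ht
    rw [ql t ht, infDist_zero_of_mem hy]; exact hε
  · intro ε hε
    refine ((hr ε hε).and_eventually (eventually_ge_atTop t0)).mono fun t ht => ?_
    rw [qr t ht.2]; exact ht.1
  · unfold J
    rw [← intervalIntegral.integral_Iic_add_Ioi ilm ir, setIntegral_congr_fun measurableSet_Ioi er,
      ← u1', setIntegral_union (by
        rw [Set.disjoint_left]; intro t h1 h2; simp at h1; linarith [h2.1]) measurableSet_Ioc il im,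
      setIntegral_congr_fun measurableSet_Iic (g := fun _ => 0) el]
    have : ∫ t in Ioc (t0 - 1) t0, e1 t ≤ ∫ t in Ioc (t0 - 1) t0, (2⁻¹ * ‖v‖ ^ 2 + B) :=
      setIntegral_mono_on im (integrableOn_const (by simp) ) measurableSet_Ioc em
    simp at this ⊢
    linarith

lemma Wells.exists_adm (w : Wells W Zm Zp d) : ∃ q u, Adm W Zm Zp q u := by
  obtain ⟨ym, hym⟩ := w.nm
  obtain ⟨yp, hyp⟩ := w.np
  have hW : W yp = 0 := (w.zero yp).2 (Or.inr hyp)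
  have hc : Core W (fun _ => yp) (fun _ => 0) :=
    ⟨aestronglyMeasurable_const, by simp [hW], by simp⟩
  have hK : IsCompact (segment ℝ ym yp) := by
    rw [segment_eq_image']
    exact isCompact_Icc.image (by fun_prop)
  obtain ⟨B, hB⟩ := (hK.image w.cont).bddAbove
  obtain ⟨q, u, h, -⟩ := w.surgery hc (fun ε hε => Eventually.frequently
    (Eventually.of_forall fun t => by rw [infDist_zero_of_mem hyp]; exact hε)) 0 hym
    (fun z hz => hB (mem_image_of_mem _ hz))
  exact ⟨q, u, h⟩

/-- near-minimizers do not return to the left well -/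
lemma Wells.confine (w : Wells W Zm Zp d) : ∃ κ > 0, ∃ r > 0, ∀ M q u, Adm W Zm Zp q u →
    (∀ q1 u1, Adm W Zm Zp q1 u1 → M ≤ J W q1 u1) → J W q u < M + κ →
    d / 3 ≤ infDist (q 0) Zm → ∀ t, 0 ≤ t → r ≤ infDist (q t) Zm := by
  obtain ⟨ρ, hρ⟩ := w.cm.isBounded.exists_norm_le
  have hd := w.dpos
  obtain ⟨η, hη, hW⟩ := w.pos_away (ρ + d / 3) (d / 6) (by positivity)
  set k := Real.sqrt (2 * η) * (d / 6) with hk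
  have hkpos : 0 < k := by have := Real.sqrt_pos.2 (show 0 < 2 * η by positivity); positivity
  obtain ⟨r, hr, hnear⟩ := w.near (half_pos hkpos)
  refine ⟨k / 2, half_pos hkpos, r, hr, fun M q u h hmin hJ h0 t ht => ?_⟩
  by_contra hlt
  push Not at hlt
  obtain ⟨y, hy, B, hB, hB'⟩ := hnear _ hlt
  obtain ⟨q1, u1, hA, hJ1⟩ := w.surgery h.toCore h.right t hy hB
  have hM := hmin q1 u1 hA
  have hcq := h.toCore.cont w.nonneg
  obtain ⟨t0, ht0, hd0⟩ := (Filter.frequently_atBot.1 (h.left (d / 6) (by positivity))) 0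
  obtain ⟨s0, s1, -, h01, hs1, e0, e1, hs⟩ := crossing
    (f := fun t => infDist (q t) Zm) ((continuous_infDist_pt Zm).comp hcq) ht0
    (a := d / 6) (b := d / 3) (by linarith) hd0.le h0
  have hc := h.toCore.cost w.nonneg h01 hη.le (fun s hs' => by
    obtain ⟨h1, h2⟩ := hs s hs'
    have h3 := w.sum_infDist (q s)
    refine hW _ ?_ h1 (by linarith)
    obtain ⟨z, hz, hz'⟩ := w.cm.exists_infDist_eq_dist w.nm (q s)
    rw [hz', dist_eq_norm] at h2
    have := hρ z hz
    have h4 := norm_le_norm_add_norm_sub' (q s) z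
    linarith)
  have h1 := h.toCore.setInt_le w.nonneg (s := Ioc s0 s1) (t := Iic t) (fun s hs => by
    simp; linarith [hs.2])
  have h2 : d / 6 ≤ ‖q s1 - q s0‖ := by
    have := infDist_le_infDist_add_dist (s := Zm) (x := q s1) (y := q s0)
    rw [dist_eq_norm] at this
    linarith
  have h3 : k ≤ Real.sqrt (2 * η) * ‖q s1 - q s0‖ := by rw [hk]; gcongr
  have h4 := intervalIntegral.integral_Iic_add_Ioi (b := t) h.int.integrableOn h.int.integrableOn
  unfold J at hJ hJ1 hM
  linarith

lemma Wells.center (w : Wells W Zm Zp d) {q u} (h : Adm W Zm Zp q u) :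
    ∃ t, d / 3 ≤ infDist (q t) Zm ∧ d / 3 ≤ infDist (q t) Zp := by
  have hcq := h.toCore.cont w.nonneg
  have hd := w.dpos
  obtain ⟨t1, -, hd1⟩ := (Filter.frequently_atTop.1 (h.right (d / 3) (by positivity))) 0
  obtain ⟨t0, ht0, hd0⟩ := (Filter.frequently_atBot.1 (h.left (d / 3) (by positivity))) t1
  have h3 := w.sum_infDist (q t1)
  obtain ⟨s0, s1, -, h01, hs1, e0, e1, hs⟩ := crossing
    (f := fun t => infDist (q t) Zm) ((continuous_infDist_pt Zm).comp hcq) ht0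
    (a := d / 3) (b := d / 3) le_rfl hd0.le (by linarith)
  have := w.sum_infDist (q s0)
  exact ⟨s0, e0.ge, by linarith⟩

end

section
variable {N : ℕ} {W : Euc N → ℝ} {Zm Zp : Set (Euc N)} {d : ℝ}

lemma weak_compact (U : ℕ → Lp (Euc N) 2 (volume : Measure ℝ)) (C : ℝ) (hU : ∀ n, ‖U n‖ ≤ C) :
    ∃ (V : Lp (Euc N) 2 (volume : Measure ℝ)) (φ : ℕ → ℕ), StrictMono φ ∧
      ∀ g, Tendsto (fun n => inner ℝ (U (φ n)) g) atTop (𝓝 (inner ℝ V g)) := by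
  have hF : Fact ((2 : ℝ≥0∞) ≠ ∞) := ⟨by norm_num⟩
  let f : ℕ → WeakDual ℝ (Lp (Euc N) 2 (volume : Measure ℝ)) := fun n =>
    StrongDual.toWeakDual (InnerProductSpace.toDual ℝ (Lp (Euc N) 2 (volume : Measure ℝ)) (U n))
  obtain ⟨a, -, φ, hφ, ha⟩ := WeakDual.isSeqCompact_closedBall ℝ
    (Lp (Euc N) 2 (volume : Measure ℝ)) 0 C
    (x := f) (fun n => by
      simp only [mem_preimage, mem_closedBall, dist_zero_right]
      have : ‖(InnerProductSpace.toDual ℝ (Lp (Euc N) 2 (volume : Measure ℝ)) (U n))‖ ≤ C := by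
        rw [LinearIsometryEquiv.norm_map]; exact hU n
      exact this)
  refine ⟨(InnerProductSpace.toDual ℝ (Lp (Euc N) 2 (volume : Measure ℝ))).symm
    (WeakDual.toStrongDual a), φ, hφ, fun g => ?_⟩
  have h1 := (WeakDual.eval_continuous g).continuousAt.tendsto.comp ha
  rw [InnerProductSpace.toDual_symm_apply]
  exact h1

lemma tendsto_of_inner {x : ℕ → Euc N} {y : Euc N}
    (h : ∀ e : Euc N, Tendsto (fun n => inner ℝ e (x n)) atTop (𝓝 (inner ℝ e y))) :
    Tendsto x atTop (𝓝 y) := by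
  have h1 : ∀ i, Tendsto (fun n => x n i) atTop (𝓝 (y i)) := by
    intro i
    have := h (EuclideanSpace.single i (1 : ℝ))
    simpa [EuclideanSpace.inner_single_left] using this
  have h2 : Tendsto (fun n => (WithLp.ofLp (x n))) atTop (𝓝 (WithLp.ofLp y)) :=
    tendsto_pi_nhds.2 h1
  exact ((PiLp.continuous_toLp 2 _).tendsto _).comp h2

lemma inf_volume_contra {w : ℝ → ℝ} (hw : Integrable w volume) {η : ℝ} (hη : 0 < η) {S : Set ℝ}
    (hS : MeasurableSet S) (hv : volume S = ∞) (h : ∀ t ∈ S, η ≤ w t) : False := by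
  have h1 : IntegrableOn (fun _ : ℝ => η) S volume := by
    refine Integrable.mono' hw.integrableOn aestronglyMeasurable_const ?_
    refine (ae_restrict_iff' hS).2 (Eventually.of_forall fun t ht => ?_)
    rw [Real.norm_of_nonneg hη.le]; exact h t ht
  rw [integrableOn_const_iff] at h1
  rcases h1 with h1 | h1
  · simp at h1; exact hη.ne' h1
  · simp [hv] at h1

theorem Wells.exists_min (w : Wells W Zm Zp d) : ∃ q u, Adm W Zm Zp q u ∧
    (∀ q1 u1, Adm W Zm Zp q1 u1 → J W q u ≤ J W q1 u1) ∧
    (∀ t ≤ 0, q t ∉ Zp) ∧ (∀ t, 0 ≤ t → q t ∉ Zm) := by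
  have hd := w.dpos
  -- the infimum
  set S : Set ℝ := {j | ∃ q u, Adm W Zm Zp q u ∧ J W q u = j} with hS
  have hSne : S.Nonempty := by
    obtain ⟨q, u, h⟩ := w.exists_adm
    exact ⟨_, q, u, h, rfl⟩
  have hJ0 : ∀ q u, 0 ≤ J W q u := fun q u => integral_nonneg fun t => by
    have := w.nonneg (q t); positivity
  have hSb : BddBelow S := ⟨0, by rintro _ ⟨q, u, -, rfl⟩; exact hJ0 q u⟩
  set m := sInf S with hm
  have hmin : ∀ q u, Adm W Zm Zp q u → m ≤ J W q u := fun q u h => csInf_le hSb ⟨q, u, h, rfl⟩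
  obtain ⟨κ1, hκ1, r1, hr1, conf1⟩ := w.confine
  obtain ⟨κ2, hκ2, r2, hr2, conf2⟩ := w.symm.confine
  obtain ⟨R, hR, hbd⟩ := w.bound (m + 1)
  have hexn : ∀ n : ℕ, ∃ q u, Adm W Zm Zp q u ∧ J W q u ≤ m + 1 / ((n : ℝ) + 1) ∧
      J W q u < m + min κ1 κ2 ∧ d / 3 ≤ infDist (q 0) Zm ∧ d / 3 ≤ infDist (q 0) Zp := by
    intro n
    have hpos : 0 < min (1 / ((n : ℝ) + 1)) (min κ1 κ2) :=
      lt_min (by positivity) (lt_min hκ1 hκ2)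
    obtain ⟨_, ⟨q, u, h, rfl⟩, hlt⟩ := Real.lt_sInf_add_pos hSne hpos
    obtain ⟨t, h1, h2⟩ := w.center h
    obtain ⟨h3, h4⟩ := h.translate w.nonneg t
    refine ⟨_, _, h3, ?_, ?_, ?_, ?_⟩
    · rw [h4]; have := min_le_left (1 / ((n : ℝ) + 1)) (min κ1 κ2); linarith
    · rw [h4]; have := min_le_right (1 / ((n : ℝ) + 1)) (min κ1 κ2); linarith
    · simpa using h1
    · simpa using h2
  choose q u hA hJn hJκ hc1 hc2 using hexn
  have hJ1 : ∀ n, J W (q n) (u n) ≤ m + 1 := fun n => (hJn n).trans (by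
    have : 1 / ((n : ℝ) + 1) ≤ 1 := by
      rw [div_le_one (by positivity)]; have : (0:ℝ) ≤ n := by positivity
      linarith
    linarith)
  have hqR : ∀ n t, ‖q n t‖ ≤ R := fun n => hbd _ _ (hA n) (hJ1 n)
  have hright : ∀ n t, 0 ≤ t → r1 ≤ infDist (q n t) Zm := fun n =>
    conf1 m _ _ (hA n) hmin ((hJκ n).trans_le (by have := min_le_left κ1 κ2; linarith)) (hc1 n)
  have hleft : ∀ n t, t ≤ 0 → r2 ≤ infDist (q n t) Zp := by
    intro n t ht
    obtain ⟨h3, h4⟩ := (hA n).reverse w.nonneg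
    have := conf2 m _ _ h3 (fun q1 u1 h1 => by
      obtain ⟨h5, h6⟩ := h1.reverse w.nonneg
      rw [← h6]; exact hmin _ _ h5)
      (by rw [h4]; exact (hJκ n).trans_le (by have := min_le_right κ1 κ2; linarith))
      (by simpa using hc2 n) (-t) (by linarith)
    simpa using this
  -- L2 elements
  have hmemn : ∀ n, MemLp (u n) 2 volume := fun n => (hA n).toCore.memLp w.nonneg
  set U : ℕ → Lp (Euc N) 2 (volume : Measure ℝ) := fun n => (hmemn n).toLp (u n) with hU
  have hinner : ∀ (f : Lp (Euc N) 2 (volume : Measure ℝ)), ‖f‖ ^ 2 = ∫ t, ‖f t‖ ^ 2 := by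
    intro f
    rw [← real_inner_self_eq_norm_sq, L2.inner_def]
    simp only [real_inner_self_eq_norm_sq]
  have hUn : ∀ n, ‖U n‖ ^ 2 = ∫ t, ‖u n t‖ ^ 2 := by
    intro n
    rw [hinner]
    refine integral_congr_ae ?_
    filter_upwards [(hmemn n).coeFn_toLp] with t ht
    rw [hU]; simp only [ht]
  have hWn0 : ∀ n, 0 ≤ ∫ t, W (q n t) := fun n => integral_nonneg fun t => w.nonneg _
  have hJe : ∀ n, J W (q n) (u n) = 2⁻¹ * ‖U n‖ ^ 2 + ∫ t, W (q n t) := fun n => by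
    rw [(hA n).toCore.J_eq w.nonneg, hUn]
  have hm0 : 0 ≤ m := Real.sInf_nonneg (by rintro _ ⟨q, u, -, rfl⟩; exact hJ0 q u)
  set C := Real.sqrt (2 * (m + 1)) with hC
  have hUC : ∀ n, ‖U n‖ ≤ C := fun n => by
    refine Real.le_sqrt_of_sq_le ?_
    have := hJe n; have := hWn0 n; have := hJ1 n; linarith
  obtain ⟨Uinf, φ1, hφ1, hweak⟩ := weak_compact U C hUC
  -- compactness of the initial points and norms
  have hK : IsCompact (closedBall (0 : Euc N) R ×ˢ Icc (0:ℝ) C) :=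
    (isCompact_closedBall _ _).prod isCompact_Icc
  obtain ⟨⟨x, A⟩, -, φ2, hφ2, hlim⟩ := hK.tendsto_subseq
    (x := fun n => (q (φ1 n) 0, ‖U (φ1 n)‖)) (fun n => by
      refine ⟨by simpa using hqR _ _, norm_nonneg _, hUC _⟩)
  have hlimx : Tendsto (fun n => q (φ1 (φ2 n)) 0) atTop (𝓝 x) :=
    (continuous_fst.tendsto _).comp hlim
  have hlimA : Tendsto (fun n => ‖U (φ1 (φ2 n))‖) atTop (𝓝 A) :=
    (continuous_snd.tendsto _).comp hlim
  set ψ : ℕ → ℕ := fun n => φ1 (φ2 n) with hψ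
  have hψm : StrictMono ψ := hφ1.comp hφ2
  have hweak' : ∀ g, Tendsto (fun n => inner ℝ (U (ψ n)) g) atTop (𝓝 (inner ℝ Uinf g)) :=
    fun g => (hweak g).comp hφ2.tendsto_atTop
  -- limit objects
  set ui : ℝ → Euc N := fun t => Uinf t with hui
  have hmi : MemLp ui 2 volume := Lp.memLp Uinf
  have hii : ∀ a b, IntervalIntegrable ui volume a b := fun a b =>
    ((hmi.locallyIntegrable (by norm_num)).integrableOn_isCompact isCompact_uIcc).intervalIntegrable
  set qi : ℝ → Euc N := fun t => x + ∫ s in (0:ℝ)..t, ui s with hqi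
  have ftc : ∀ a b : ℝ, qi b - qi a = ∫ t in a..b, ui t := by
    intro a b
    simp only [hqi]
    rw [← intervalIntegral.integral_interval_sub_left (hii 0 b) (hii 0 a)]
    abel
  have hcont : Continuous qi := cont_of_ftc hii ftc
  have hset : ∀ a b : ℝ, Tendsto (fun n => ∫ s in Ioc a b, u (ψ n) s) atTop
      (𝓝 (∫ s in Ioc a b, ui s)) := by
    intro a b
    refine tendsto_of_inner fun e => ?_
    have h1 := hweak' (indicatorConstLp 2 (measurableSet_Ioc (a := a) (b := b))
      (by simp) e)
    have h2 : ∀ f : Lp (Euc N) 2 (volume : Measure ℝ), inner ℝ f (indicatorConstLp 2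
        (measurableSet_Ioc (a := a) (b := b)) (by simp) e) = inner ℝ e (∫ s in Ioc a b, f s) := by
      intro f
      rw [real_inner_comm, L2.inner_indicatorConstLp_eq_inner_setIntegral]
    simp only [h2] at h1
    refine h1.congr fun n => ?_
    congr 1
    refine integral_congr_ae (ae_restrict_of_ae ?_)
    exact (hmemn (ψ n)).coeFn_toLp
  have hptw : ∀ t, Tendsto (fun n => q (ψ n) t) atTop (𝓝 (qi t)) := by
    intro t
    have h1 : ∀ n, q (ψ n) t = q (ψ n) 0 + ∫ s in (0:ℝ)..t, u (ψ n) s := fun n => by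
      rw [← (hA (ψ n)).ftc]; abel
    simp only [h1]
    refine hlimx.add ?_
    simp only [intervalIntegral]
    exact (hset _ _).sub (hset _ _)
  have hqiR : ∀ t, ‖qi t‖ ≤ R := fun t => le_of_tendsto' (hptw t).norm fun n => hqR _ t
  have hiright : ∀ t, 0 ≤ t → r1 ≤ infDist (qi t) Zm := fun t ht =>
    ge_of_tendsto' (((continuous_infDist_pt Zm).tendsto _).comp (hptw t)) fun n => hright _ t ht
  have hileft : ∀ t, t ≤ 0 → r2 ≤ infDist (qi t) Zp := fun t ht =>
    ge_of_tendsto' (((continuous_infDist_pt Zp).tendsto _).comp (hptw t)) fun n => hleft _ t ht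
  -- lower semicontinuity of the norm
  have hA0 : 0 ≤ A := ge_of_tendsto' hlimA fun n => norm_nonneg _
  have hUA : ‖Uinf‖ ≤ A := by
    have h1 := hweak' Uinf
    rw [real_inner_self_eq_norm_sq] at h1
    have h2 : ‖Uinf‖ ^ 2 ≤ A * ‖Uinf‖ :=
      le_of_tendsto_of_tendsto' h1 (hlimA.mul_const _) fun n => real_inner_le_norm _ _
    by_contra hlt
    push Not at hlt
    nlinarith
  -- Fatou
  have hJlim : Tendsto (fun n => J W (q (ψ n)) (u (ψ n))) atTop (𝓝 m) := by
    have h1 : Tendsto (fun n => m + 1 / ((ψ n : ℝ) + 1)) atTop (𝓝 m) := by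
      have := (tendsto_one_div_add_atTop_nhds_zero_nat (𝕜 := ℝ)).comp hψm.tendsto_atTop
      simpa using this.const_add m
    exact tendsto_of_tendsto_of_tendsto_of_le_of_le tendsto_const_nhds h1
      (fun n => hmin _ _ (hA _)) (fun n => hJn _)
  have hWlim : Tendsto (fun n => ∫ t, W (q (ψ n) t)) atTop (𝓝 (m - 2⁻¹ * A ^ 2)) := by
    refine (hJlim.sub ((hlimA.pow 2).const_mul 2⁻¹)).congr fun n => ?_
    rw [hJe]; ring
  have hfatou : ∫⁻ t, ENNReal.ofReal (W (qi t)) ≤ ENNReal.ofReal (m - 2⁻¹ * A ^ 2) := by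
    have h1 : ∀ t, ENNReal.ofReal (W (qi t)) =
        liminf (fun n => ENNReal.ofReal (W (q (ψ n) t))) atTop := fun t =>
      (((ENNReal.continuous_ofReal.comp w.cont).tendsto _).comp (hptw t)).liminf_eq.symm
    have h2 : ∀ n, ∫⁻ t, ENNReal.ofReal (W (q (ψ n) t)) = ENNReal.ofReal (∫ t, W (q (ψ n) t)) :=
      fun n => (ofReal_integral_eq_lintegral_ofReal ((hA (ψ n)).toCore.intW w.nonneg)
        (Eventually.of_forall fun t => w.nonneg _)).symm
    have h3 : ∫⁻ t, liminf (fun n => ENNReal.ofReal (W (q (ψ n) t))) atTop ≤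
        liminf (fun n => ∫⁻ t, ENNReal.ofReal (W (q (ψ n) t))) atTop :=
      lintegral_liminf_le' fun n => ((w.cont.comp
        ((hA (ψ n)).toCore.cont w.nonneg)).measurable.ennreal_ofReal).aemeasurable
    simp only [h1]
    refine h3.trans (le_of_eq ?_)
    simp only [h2]
    exact ((ENNReal.continuous_ofReal.tendsto _).comp hWlim).liminf_eq
  have hintW : Integrable (fun t => W (qi t)) volume := by
    refine ⟨(w.cont.comp hcont).aestronglyMeasurable, ?_⟩
    rw [hasFiniteIntegral_iff_ofReal (Eventually.of_forall fun t => w.nonneg _)]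
    exact hfatou.trans_lt ENNReal.ofReal_lt_top
  have hmA : 0 ≤ m - 2⁻¹ * A ^ 2 := ge_of_tendsto' hWlim fun n => hWn0 _
  have hWle : ∫ t, W (qi t) ≤ m - 2⁻¹ * A ^ 2 := by
    rw [← ofReal_integral_eq_lintegral_ofReal hintW (Eventually.of_forall fun t => w.nonneg _)]
      at hfatou
    exact (ENNReal.ofReal_le_ofReal_iff hmA).1 hfatou
  have hcore : Core W qi ui := by
    refine ⟨hmi.1, ?_, ftc⟩
    exact (((memLp_two_iff_integrable_sq_norm hmi.1).1 hmi).const_mul 2⁻¹).add hintW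
  have hadm : Adm W Zm Zp qi ui := by
    refine ⟨hcore, fun ε hε => ?_, fun ε hε => ?_⟩
    · by_contra hne
      rw [not_frequently, eventually_atBot] at hne
      obtain ⟨T, hT⟩ := hne
      obtain ⟨η, hη, hpos⟩ := w.pos_away R (min ε r2) (lt_min hε hr2)
      refine inf_volume_contra hintW hη (S := Iic (min T 0)) measurableSet_Iic Real.volume_Iic ?_
      intro t ht
      refine hpos _ (hqiR t) ?_ ?_
      · exact (min_le_left _ _).trans (not_lt.1 (hT t (le_trans ht (min_le_left _ _))))
      · exact (min_le_right _ _).trans (hileft t (le_trans ht (min_le_right _ _)))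
    · by_contra hne
      rw [not_frequently, eventually_atTop] at hne
      obtain ⟨T, hT⟩ := hne
      obtain ⟨η, hη, hpos⟩ := w.pos_away R (min ε r1) (lt_min hε hr1)
      refine inf_volume_contra hintW hη (S := Ici (max T 0)) measurableSet_Ici Real.volume_Ici ?_
      intro t ht
      refine hpos _ (hqiR t) ?_ ?_
      · exact (min_le_right _ _).trans (hiright t (le_trans (le_max_right _ _) ht))
      · exact (min_le_left _ _).trans (not_lt.1 (hT t (le_trans (le_max_left _ _) ht)))
  have hJi : J W qi ui ≤ m := by
    rw [hcore.J_eq w.nonneg, ← hinner Uinf]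
    have : ‖Uinf‖ ^ 2 ≤ A ^ 2 := by gcongr
    linarith
  refine ⟨qi, ui, hadm, fun q1 u1 h1 => hJi.trans (hmin _ _ h1), fun t ht hz => ?_,
    fun t ht hz => ?_⟩
  · have := hileft t ht; rw [infDist_zero_of_mem hz] at this; linarith
  · have := hiright t ht; rw [infDist_zero_of_mem hz] at this; linarith

end

section
variable {N : ℕ} {W : Euc N → ℝ} {Zm Zp : Set (Euc N)} {d : ℝ} {V : Euc N → ℝ} {c : ℝ}

lemma continuous_grad (hV : ContDiff ℝ 1 V) : Continuous (gradient V) := by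
  unfold gradient
  exact (LinearIsometryEquiv.continuous _).comp (hV.continuous_fderiv one_ne_zero)

lemma hasDerivAt_comp_grad (hV : ContDiff ℝ 1 V) {p : ℝ → Euc N} {p' : Euc N} {t : ℝ}
    (hp : HasDerivAt p p' t) : HasDerivAt (fun s => V (p s)) (inner ℝ (gradient V (p t)) p') t := by
  have h1 := ((hV.differentiable one_ne_zero) (p t)).hasFDerivAt.comp_hasDerivAt t hp
  have h2 : inner ℝ (gradient V (p t)) p' = fderiv ℝ V (p t) p' := by
    unfold gradient
    rw [InnerProductSpace.toDual_symm_apply]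
  rw [h2]
  exact h1

lemma weak_EL (w : Wells W Zm Zp d) (hV : ContDiff ℝ 1 V)
    (hWV : ∀ x, x ∉ Zm ∪ Zp → W x = V x - c) {q u : ℝ → Euc N} (h : Adm W Zm Zp q u)
    (hmin : ∀ q1 u1, Adm W Zm Zp q1 u1 → J W q u ≤ J W q1 u1) {a b : ℝ} (hab : a < b)
    (hq : ∀ t ∈ Icc a b, q t ∉ Zm ∪ Zp) {g : ℝ → ℝ} (hg : Continuous g)
    (hsupp : ∀ t, t ∉ Icc a b → g t = 0) (hg0 : ∫ t in a..b, g t = 0) (e : Euc N) :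
    (∫ t, g t * inner ℝ (u t) e) +
      ∫ t in a..b, (∫ s in a..t, g s) * inner ℝ (gradient V (q t)) e = 0 := by
  have hqc := h.toCore.cont w.nonneg
  have hgi : ∀ s t, IntervalIntegrable g volume s t := fun s t => hg.intervalIntegrable s t
  set φ : ℝ → ℝ := fun t => ∫ s in a..t, g s with hφ
  have hφc : Continuous φ := intervalIntegral.continuous_primitive hgi a
  have hφ0 : ∀ t, t ∉ Icc a b → φ t = 0 := by
    intro t ht
    rcases lt_or_ge t a with h1 | h1
    · simp only [hφ]
      rw [intervalIntegral.integral_of_ge h1.le]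
      have hae : ∀ᵐ s ∂(volume.restrict (Ioc t a)), g s = 0 := by
        have : ∀ᵐ s ∂(volume : Measure ℝ), s ≠ a := by simp [ae_iff]
        refine (ae_restrict_iff' measurableSet_Ioc).2 ?_
        filter_upwards [this] with s hs hs'
        exact hsupp s fun h => hs (le_antisymm hs'.2 h.1)
      rw [integral_congr_ae hae]; simp
    · have h2 : b < t := by
        by_contra hlt; exact ht ⟨h1, not_lt.1 hlt⟩
      simp only [hφ]
      rw [← intervalIntegral.integral_add_adjacent_intervals (hgi a b) (hgi b t), hg0, zero_add,
        intervalIntegral.integral_of_le h2.le,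
        setIntegral_congr_fun measurableSet_Ioc (g := fun _ => 0)
        (fun s hs => hsupp s fun h => by linarith [h.2, hs.1])]
      simp
  have hcs : HasCompactSupport g := HasCompactSupport.intro isCompact_Icc hsupp
  have hgL2 : MemLp g 2 volume := hg.memLp_of_hasCompactSupport hcs
  have huL2 := h.toCore.memLp w.nonneg
  -- perturbed curve
  set qe : ℝ → ℝ → Euc N := fun ε t => q t + (ε * φ t) • e with hqe
  set ue : ℝ → ℝ → Euc N := fun ε t => u t + (ε * g t) • e with hue
  have hue2 : ∀ ε, MemLp (ue ε) 2 volume := by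
    intro ε
    have h1 : MemLp (fun t => ε • g t) 2 volume := hgL2.const_smul ε
    have h2 : MemLp (fun t => (ε * g t) • e) 2 volume := by
      have h3 := (ContinuousLinearMap.toSpanSingleton ℝ e).comp_memLp' h1
      refine h3.congr_norm ?_ ?_
      · exact (((continuous_const.mul hg).smul continuous_const)).aestronglyMeasurable
      · exact Eventually.of_forall fun t => by simp
    exact huL2.add h2
  have hqec : ∀ ε, Continuous (qe ε) := fun ε => by
    exact hqc.add ((continuous_const.mul hφc).smul continuous_const)
  have hdiffc : ∀ ε, Continuous (fun t => W (qe ε t) - W (q t)) := fun ε =>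
    (w.cont.comp (hqec ε)).sub (w.cont.comp hqc)
  have hdiff0 : ∀ ε t, t ∉ Icc a b → W (qe ε t) - W (q t) = 0 := by
    intro ε t ht
    simp [hqe, hφ0 t ht]
  have hdiffi : ∀ ε, Integrable (fun t => W (qe ε t) - W (q t)) volume := fun ε =>
    (hdiffc ε).integrable_of_hasCompactSupport (HasCompactSupport.intro isCompact_Icc (hdiff0 ε))
  have hWe : ∀ ε, Integrable (fun t => W (qe ε t)) volume := fun ε => by
    have := (hdiffi ε).add (h.toCore.intW w.nonneg)
    exact this.congr (Eventually.of_forall fun t => by simp)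
  have hadm : ∀ ε, Adm W Zm Zp (qe ε) (ue ε) := by
    intro ε
    refine ⟨⟨(hue2 ε).1, ?_, ?_⟩, ?_, ?_⟩
    · exact (((memLp_two_iff_integrable_sq_norm (hue2 ε).1).1 (hue2 ε)).const_mul 2⁻¹).add (hWe ε)
    · intro s t
      simp only [hqe, hue]
      have hi2 : IntervalIntegrable (fun τ => (ε * g τ) • e) volume s t :=
        Continuous.intervalIntegrable (by fun_prop) s t
      rw [intervalIntegral.integral_add (h.toCore.locInt w.nonneg s t) hi2,
        intervalIntegral.integral_smul_const, intervalIntegral.integral_const_mul,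
        ← intervalIntegral.integral_interval_sub_left (hgi a t) (hgi a s), ← h.ftc]
      simp only [hφ, mul_sub, sub_smul]
      abel
    · intro ε' hε'
      refine ((h.left ε' hε').and_eventually (eventually_lt_atBot a)).mono fun t ht => ?_
      simp only [hqe, hφ0 t (fun h => by linarith [h.1, ht.2])]
      simpa using ht.1
    · intro ε' hε'
      refine ((h.right ε' hε').and_eventually (eventually_gt_atTop b)).mono fun t ht => ?_
      simp only [hqe, hφ0 t (fun h => by linarith [h.2, ht.2])]
      simpa using ht.1
  have hgu : Integrable (fun t => g t * inner ℝ (u t) e) volume := by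
    have h1 : MemLp (fun t => inner ℝ (u t) e) 2 volume := huL2.inner_const e
    exact hgL2.integrable_mul h1
  have hgg : Integrable (fun t => g t ^ 2 * ‖e‖ ^ 2) volume := by
    exact (hgL2.integrable_sq).mul_const _
  set A := ∫ t, g t * inner ℝ (u t) e with hA
  set B := 2⁻¹ * ∫ t, g t ^ 2 * ‖e‖ ^ 2 with hB
  set G : ℝ → ℝ := fun ε => ∫ t in a..b, (W (qe ε t) - W (q t)) with hG
  have hGe : ∀ ε, ∫ t, (W (qe ε t) - W (q t)) = G ε := by
    intro ε
    simp only [hG]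
    rw [intervalIntegral.integral_of_le hab.le, ← integral_Icc_eq_integral_Ioc,
      setIntegral_eq_integral_of_forall_compl_eq_zero (hdiff0 ε)]
  have hJe : ∀ ε, J W (qe ε) (ue ε) = J W q u + (ε * A + ε ^ 2 * B + G ε) := by
    intro ε
    rw [(hadm ε).toCore.J_eq w.nonneg, h.toCore.J_eq w.nonneg]
    have h1 : ∫ t, ‖ue ε t‖ ^ 2 = (∫ t, ‖u t‖ ^ 2) + (2 * ε) * A + ε ^ 2 * (2 * B) := by
      have h2 : (fun t => ‖ue ε t‖ ^ 2) = fun t => (‖u t‖ ^ 2 + (2 * ε) * (g t * inner ℝ (u t) e))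
          + ε ^ 2 * (g t ^ 2 * ‖e‖ ^ 2) := by
        funext t
        simp only [hue]
        rw [norm_add_sq_real, inner_smul_right, norm_smul, mul_pow, Real.norm_eq_abs, sq_abs]
        ring
      have i12 : Integrable (fun t => ‖u t‖ ^ 2 + (2 * ε) * (g t * inner ℝ (u t) e)) volume :=
        (h.toCore.intU w.nonneg).add (hgu.const_mul _)
      rw [h2, integral_add i12 (hgg.const_mul _),
        integral_add (h.toCore.intU w.nonneg) (hgu.const_mul _), integral_const_mul,
        integral_const_mul, hB]
      ring
    have h3 : ∫ t, W (qe ε t) = (∫ t, W (q t)) + G ε := by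
      rw [← hGe, integral_sub (hWe ε) (h.toCore.intW w.nonneg)]; ring
    rw [h1, h3]; ring
  -- derivative of G
  set D := ∫ t in a..b, φ t * inner ℝ (gradient V (q t)) e with hD
  have hgrad := continuous_grad hV
  have hGd : HasDerivAt G D 0 := by
    set F : ℝ → ℝ → ℝ := fun ε t => V (qe ε t) - V (q t) with hF
    set F' : ℝ → ℝ → ℝ := fun ε t => φ t * inner ℝ (gradient V (qe ε t)) e with hF'
    have hF'c : Continuous (fun p : ℝ × ℝ => F' p.1 p.2) := by
      simp only [hF', hqe]
      have h1 : Continuous fun p : ℝ × ℝ => q p.2 + (p.1 * φ p.2) • e :=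
        (hqc.comp continuous_snd).add
          ((continuous_fst.mul (hφc.comp continuous_snd)).smul continuous_const)
      exact (hφc.comp continuous_snd).mul ((hgrad.comp h1).inner continuous_const)
    obtain ⟨K, hK⟩ := ((isCompact_Icc (a := (-1:ℝ)) (b := 1)).prod
      (isCompact_Icc (a := a) (b := b))).exists_bound_of_continuousOn hF'c.continuousOn
    have hFd : HasDerivAt (fun ε => ∫ t in a..b, F ε t) (∫ t in a..b, F' 0 t) 0 := by
      refine (intervalIntegral.hasDerivAt_integral_of_dominated_loc_of_deriv_le
        (s := Icc (-1) 1) (bound := fun _ => K) (F := F) (F' := F')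
        (Icc_mem_nhds (by norm_num) (by norm_num)) ?_ ?_ ?_ ?_ ?_ ?_).2
      · exact Eventually.of_forall fun ε => ((hV.continuous.comp (hqec ε)).sub
          (hV.continuous.comp hqc)).aestronglyMeasurable
      · exact ((hV.continuous.comp (hqec 0)).sub (hV.continuous.comp hqc)).intervalIntegrable _ _
      · exact (hF'c.comp (continuous_const.prodMk continuous_id)).aestronglyMeasurable
      · refine Eventually.of_forall fun t ht ε hε => ?_
        rw [uIoc_of_le hab.le] at ht
        exact hK (ε, t) ⟨hε, ht.1.le, ht.2⟩
      · exact intervalIntegrable_const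
      · refine Eventually.of_forall fun t ht ε hε => ?_
        have h1 : HasDerivAt (fun ε => qe ε t) (φ t • e) ε := by
          simp only [hqe]
          simpa using (((hasDerivAt_id ε).mul_const (φ t)).smul_const e).const_add (q t)
        have h2 := (hasDerivAt_comp_grad hV h1).sub_const (V (q t))
        simpa only [hF', hF, inner_smul_right] using h2
    have hD' : D = ∫ t in a..b, F' 0 t := by
      simp only [hD, hF', hqe]; simp
    rw [hD']
    refine hFd.congr_of_eventuallyEq ?_
    have hopen : IsOpen (Zm ∪ Zp)ᶜ := (w.cm.isClosed.union w.cp.isClosed).isOpen_compl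
    have hev : ∀ᶠ ε in 𝓝 (0:ℝ), ∀ t ∈ Icc a b, qe ε t ∈ (Zm ∪ Zp)ᶜ := by
      refine isCompact_Icc.eventually_forall_of_forall_eventually fun t ht => ?_
      have h1 : Continuous fun p : ℝ × ℝ => q p.2 + (p.1 * φ p.2) • e :=
        (hqc.comp continuous_snd).add
          ((continuous_fst.mul (hφc.comp continuous_snd)).smul continuous_const)
      refine h1.continuousAt.eventually (hopen.mem_nhds ?_)
      simpa using hq t ht
    filter_upwards [hev] with ε hε
    simp only [hG, hF]
    refine intervalIntegral.integral_congr fun t ht => ?_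
    rw [uIcc_of_le hab.le] at ht
    simp only [hWV _ (hε t ht), hWV _ (hq t ht)]; ring
  have hmin0 : IsLocalMin (fun ε => ε * A + ε ^ 2 * B + G ε) 0 := by
    refine Eventually.of_forall fun ε => ?_
    have h1 := hmin _ _ (hadm ε)
    rw [hJe] at h1
    have : G 0 = 0 := by simp [hG, hqe]
    simp only [this]
    simp; linarith
  have hder : HasDerivAt (fun ε => ε * A + ε ^ 2 * B + G ε) (A + D) 0 := by
    have h1 := (((hasDerivAt_id (0:ℝ)).mul_const A).add
      (((hasDerivAt_id (0:ℝ)).pow 2).mul_const B)).add hGd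
    have h2 : (1 * A + (((2 : ℕ) : ℝ) * id (0:ℝ) ^ (2 - 1) * 1) * B) + D = A + D := by simp
    rw [← h2]
    exact h1
  exact hmin0.hasDerivAt_eq_zero hder

lemma strong_EL (w : Wells W Zm Zp d) (hV : ContDiff ℝ 1 V)
    (hWV : ∀ x, x ∉ Zm ∪ Zp → W x = V x - c) {q u : ℝ → Euc N} (h : Adm W Zm Zp q u)
    (hmin : ∀ q1 u1, Adm W Zm Zp q1 u1 → J W q u ≤ J W q1 u1) {a b : ℝ} (hab : a < b)
    (hq : ∀ t ∈ Icc a b, q t ∉ Zm ∪ Zp) :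
    ∃ C : Euc N, (∀ᵐ t, t ∈ Ioo a b → u t = C + ∫ s in a..t, gradient V (q s)) ∧
      ∀ t ∈ Ioo a b, HasDerivAt q (C + ∫ s in a..t, gradient V (q s)) t := by
  have hqc := h.toCore.cont w.nonneg
  have hgc : Continuous (fun t => gradient V (q t)) := (continuous_grad hV).comp hqc
  set F : ℝ → Euc N := fun t => ∫ s in a..t, gradient V (q s) with hF
  have hFd : ∀ t, HasDerivAt F (gradient V (q t)) t := fun t =>
    intervalIntegral.integral_hasDerivAt_right (hgc.intervalIntegrable _ _)
      (hgc.stronglyMeasurableAtFilter _ _) hgc.continuousAt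
  have hFc : Continuous F := continuous_iff_continuousAt.2 fun t => (hFd t).continuousAt
  have huL : LocallyIntegrable u volume :=
    (h.toCore.memLp w.nonneg).locallyIntegrable (by norm_num)
  have hfL : LocallyIntegrable (fun t => u t - F t) volume := huL.sub hFc.locallyIntegrable
  -- the key identity
  have key : ∀ ψ : ℝ → ℝ, Continuous ψ → (∀ t, t ∉ Icc a b → ψ t = 0) → ∫ t, ψ t = 0 →
      ∫ t, ψ t • (u t - F t) = 0 := by
    intro ψ hψ hs hi
    have hcs : HasCompactSupport ψ := HasCompactSupport.intro isCompact_Icc hs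
    have hab' : ∀ (f : ℝ → ℝ), (∀ t, t ∉ Icc a b → f t = 0) → ∫ t in a..b, f t = ∫ t, f t := by
      intro f hf
      rw [intervalIntegral.integral_of_le hab.le, ← integral_Icc_eq_integral_Ioc,
        setIntegral_eq_integral_of_forall_compl_eq_zero hf]
    have hi' : ∫ t in a..b, ψ t = 0 := by rw [hab' ψ hs, hi]
    refine ext_inner_right ℝ fun e => ?_
    have hInteg : Integrable (fun t => ψ t • (u t - F t)) volume :=
      hfL.integrable_smul_left_of_hasCompactSupport hψ hcs
    rw [inner_zero_left, real_inner_comm, ← integral_inner hInteg e]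
    have hEL := weak_EL w hV hWV h hmin hab hq hψ hs hi' e
    have hφd : ∀ t, HasDerivAt (fun t => ∫ s in a..t, ψ s) (ψ t) t := fun t =>
      intervalIntegral.integral_hasDerivAt_right (hψ.intervalIntegrable _ _)
        (hψ.stronglyMeasurableAtFilter _ _) hψ.continuousAt
    have hFe : ∀ t, HasDerivAt (fun t => inner ℝ (F t) e) (inner ℝ (gradient V (q t)) e) t := by
      intro t
      simpa using (hFd t).inner ℝ (hasDerivAt_const t e)
    have hbp := intervalIntegral.integral_mul_deriv_eq_deriv_mul (a := a) (b := b)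
      (fun t _ => hφd t) (fun t _ => hFe t) (hψ.intervalIntegrable _ _)
      ((hgc.inner continuous_const).intervalIntegrable _ _)
    rw [hi', intervalIntegral.integral_same, zero_mul, zero_mul, sub_zero, zero_sub,
      hab' (fun t => ψ t * inner ℝ (F t) e) (fun t ht => by simp [hs t ht])] at hbp
    rw [hbp] at hEL
    have i1 : Integrable (fun t => ψ t * inner ℝ (u t) e) volume := by
      have := (huL.integrable_smul_left_of_hasCompactSupport hψ hcs).inner_const (𝕜 := ℝ) e
      simpa only [real_inner_smul_left] using this
    have i2 : Integrable (fun t => ψ t * inner ℝ (F t) e) volume := by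
      have := (hFc.locallyIntegrable.integrable_smul_left_of_hasCompactSupport hψ hcs
        (μ := volume)).inner_const (𝕜 := ℝ) e
      simpa only [real_inner_smul_left] using this
    have : (fun t => inner ℝ e (ψ t • (u t - F t))) = fun t => ψ t * inner ℝ (u t) e
        - ψ t * inner ℝ (F t) e := by
      funext t
      rw [real_inner_smul_right, inner_sub_right, real_inner_comm, real_inner_comm e (F t)]
      ring
    rw [this, integral_sub i1 i2]
    linarith
  -- a bump
  let bmp : ContDiffBump ((a + b) / 2) := ⟨(b - a) / 8, (b - a) / 4, by linarith, by linarith⟩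
  set hb : ℝ → ℝ := bmp.normed volume with hhb
  have hbc : Continuous hb := (bmp.contDiff_normed (n := 0)).continuous
  have hb1 : ∫ t, hb t = 1 := bmp.integral_normed
  have hb0 : ∀ t, t ∉ Icc a b → hb t = 0 := by
    intro t ht
    by_contra hne
    have h1 : t ∈ Function.support hb := hne
    rw [hhb, bmp.support_normed_eq, mem_ball, Real.dist_eq, abs_lt] at h1
    have e1 : bmp.rOut = (b - a) / 4 := rfl
    rw [e1] at h1
    exact ht ⟨by linarith [h1.1], by linarith [h1.2]⟩
  have hbcs : HasCompactSupport hb := HasCompactSupport.intro isCompact_Icc hb0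
  set C : Euc N := ∫ t, hb t • (u t - F t) with hC
  have hae : ∀ᵐ t, t ∈ Ioo a b → u t - F t - C = 0 := by
    refine isOpen_Ioo.ae_eq_zero_of_integral_contDiff_smul_eq_zero
      ((hfL.sub (locallyIntegrable_const C)).locallyIntegrableOn _) ?_
    intro g hg hgcs hgs
    have hg0 : ∀ t, t ∉ Icc a b → g t = 0 := fun t ht =>
      image_eq_zero_of_notMem_tsupport fun h => ht (Ioo_subset_Icc_self (hgs h))
    have hgi : Integrable g volume := hg.continuous.integrable_of_hasCompactSupport hgcs
    have hhi : Integrable hb volume := hbc.integrable_of_hasCompactSupport hbcs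
    have k := key (fun t => g t - (∫ s, g s) * hb t) (hg.continuous.sub (continuous_const.mul hbc))
      (fun t ht => by simp [hg0 t ht, hb0 t ht])
      (by rw [integral_sub hgi (hhi.const_mul _), integral_const_mul, hb1]; ring)
    have j1 := hfL.integrable_smul_left_of_hasCompactSupport hg.continuous hgcs
    have j2 := hfL.integrable_smul_left_of_hasCompactSupport hbc hbcs
    have : (fun t => (g t - (∫ s, g s) * hb t) • (u t - F t)) = fun t =>
        g t • (u t - F t) - (∫ s, g s) • (hb t • (u t - F t)) := by
      funext t; rw [sub_smul, mul_smul]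
    have j3 : Integrable (fun t => (∫ s, g s) • (hb t • (u t - F t))) volume := by
      exact j2.smul (∫ s, g s)
    rw [this, integral_sub j1 j3, integral_smul, ← hC] at k
    have : (fun t => g t • (u t - F t - C)) = fun t => g t • (u t - F t) - g t • C := by
      funext t; rw [smul_sub (g t) (u t - F t) C]
    have j4 : Integrable (fun t => g t • C) volume := hgi.smul_const C
    rw [this, integral_sub j1 j4, integral_smul_const]
    exact k
  refine ⟨C, ?_, ?_⟩
  · filter_upwards [hae] with t ht ht'
    have := ht ht'
    rw [sub_eq_zero, sub_eq_iff_eq_add] at this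
    exact this
  · intro t ht
    have hcc : Continuous (fun t => C + F t) := continuous_const.add hFc
    have heq : ∀ᶠ s in 𝓝 t, q s = q a + ∫ τ in a..s, (C + F τ) := by
      filter_upwards [isOpen_Ioo.mem_nhds ht] with s hs
      have h1 : ∫ τ in a..s, u τ = ∫ τ in a..s, (C + F τ) := by
        rw [intervalIntegral.integral_of_le hs.1.le, intervalIntegral.integral_of_le hs.1.le]
        refine setIntegral_congr_ae measurableSet_Ioc ?_
        filter_upwards [hae] with τ hτ hτ'
        have := hτ ⟨hτ'.1, hτ'.2.trans_lt hs.2⟩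
        rw [sub_eq_zero, sub_eq_iff_eq_add] at this
        exact this
      rw [← h1, ← h.ftc]; abel
    have hd : HasDerivAt (fun s => q a + ∫ τ in a..s, (C + F τ)) (C + F t) t :=
      (intervalIntegral.integral_hasDerivAt_right (hcc.intervalIntegrable _ _)
        (hcc.stronglyMeasurableAtFilter _ _) hcc.continuousAt).const_add _
    exact hd.congr_of_eventuallyEq heq

end

section
variable {N : ℕ} {W : Euc N → ℝ} {Zm Zp : Set (Euc N)} {d : ℝ} {V : Euc N → ℝ} {c : ℝ}

/-- Local solution at a time `t`, with energy `-c`. -/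
def LS (V : Euc N → ℝ) (c : ℝ) (p : ℝ → Euc N) (t : ℝ) : Prop :=
  DifferentiableAt ℝ p t ∧ HasDerivAt (deriv p) (gradient V (p t)) t ∧
    2⁻¹ * ‖deriv p t‖ ^ 2 = V (p t) - c

lemma left_zero (w : Wells W Zm Zp d) {q u : ℝ → Euc N} (h : Adm W Zm Zp q u)
    (hmin : ∀ q1 u1, Adm W Zm Zp q1 u1 → J W q u ≤ J W q1 u1) {α : ℝ} (hα : q α ∈ Zm) :
    ∀ᵐ t, t ≤ α → 2⁻¹ * ‖u t‖ ^ 2 - W (q t) = 0 := by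
  obtain ⟨q1, u1, h1, hJ⟩ := w.surgery h.toCore h.right α hα (B := 0) (by
    intro z hz
    rw [segment_same, mem_singleton_iff] at hz
    rw [hz, (w.zero _).2 (Or.inl hα)])
  have h2 := (hmin _ _ h1).trans hJ
  have h3 : J W q u = (∫ t in Iic α, (2⁻¹ * ‖u t‖ ^ 2 + W (q t))) +
      ∫ t in Ioi α, (2⁻¹ * ‖u t‖ ^ 2 + W (q t)) := by
    unfold J
    rw [← integral_add_compl (s := Iic α) measurableSet_Iic h.int, compl_Iic]
  have hnn : ∀ t, 0 ≤ 2⁻¹ * ‖u t‖ ^ 2 + W (q t) := fun t => by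
    have := w.nonneg (q t); positivity
  have h4 : ∫ t in Iic α, (2⁻¹ * ‖u t‖ ^ 2 + W (q t)) = 0 := by
    refine le_antisymm ?_ (integral_nonneg hnn)
    simp only [sub_self, norm_zero] at h2
    norm_num at h2
    linarith
  have h5 := (setIntegral_eq_zero_iff_of_nonneg_ae (Eventually.of_forall hnn)
    h.int.integrableOn).1 h4
  have h6 := (ae_restrict_iff' measurableSet_Iic).1 h5
  filter_upwards [h6] with t ht hta
  have e := ht hta
  simp only [Pi.zero_apply] at e
  have a1 := w.nonneg (q t)
  have a2 : 0 ≤ ‖u t‖ ^ 2 := by positivity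
  linarith

lemma right_zero (w : Wells W Zm Zp d) {q u : ℝ → Euc N} (h : Adm W Zm Zp q u)
    (hmin : ∀ q1 u1, Adm W Zm Zp q1 u1 → J W q u ≤ J W q1 u1) {ω : ℝ} (hω : q ω ∈ Zp) :
    ∀ᵐ t, ω ≤ t → 2⁻¹ * ‖u t‖ ^ 2 - W (q t) = 0 := by
  obtain ⟨h1, hJ⟩ := h.reverse w.nonneg
  have h2 := left_zero w.symm h1 (fun q1 u1 hq1 => by
    obtain ⟨h3, hJ3⟩ := hq1.reverse w.nonneg
    rw [hJ, ← hJ3]; exact hmin _ _ h3) (α := -ω) (by simpa using hω)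
  have h3 := (Measure.measurePreserving_neg (volume : Measure ℝ)).quasiMeasurePreserving.ae h2
  filter_upwards [h3] with t ht hωt
  simpa using ht (by linarith)

lemma virial (w : Wells W Zm Zp d) {q u : ℝ → Euc N} (h : Adm W Zm Zp q u)
    (hmin : ∀ q1 u1, Adm W Zm Zp q1 u1 → J W q u ≤ J W q1 u1) :
    ∫ t, (2⁻¹ * ‖u t‖ ^ 2 - W (q t)) = 0 := by
  have iU := h.toCore.intU w.nonneg
  have iW := h.toCore.intW w.nonneg
  rw [integral_sub (iU.const_mul _) iW, integral_const_mul]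
  set A := 2⁻¹ * ∫ t, ‖u t‖ ^ 2 with hA
  set B := ∫ t, W (q t) with hB
  have hA0 : 0 ≤ A := by
    have : 0 ≤ ∫ t, ‖u t‖ ^ 2 := integral_nonneg fun t => by positivity
    positivity
  have hB0 : 0 ≤ B := integral_nonneg fun t => w.nonneg _
  have key : ∀ l : ℝ, 0 < l → 0 ≤ (l - 1) * (A * l - B) := by
    intro l hl
    have h1 := hmin _ _ (h.scale w.nonneg hl 0)
    rw [(h.toCore.affine w.nonneg hl.ne' 0).2, h.toCore.J_eq w.nonneg, ← hA, ← hB,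
      abs_of_pos (inv_pos.2 hl)] at h1
    have h2 : 2⁻¹ * l ^ 2 * (∫ t, ‖u t‖ ^ 2) = l ^ 2 * A := by rw [hA]; ring
    rw [h2] at h1
    have h3 := mul_le_mul_of_nonneg_left h1 hl.le
    rw [← mul_assoc, mul_inv_cancel₀ hl.ne', one_mul] at h3
    nlinarith
  rcases lt_trichotomy A B with hlt | heq | hgt
  · have hs : 0 < A + B := by linarith
    have h1 := key (2 * B / (A + B)) (div_pos (by linarith) hs)
    have h2 : 2 * B / (A + B) - 1 = (B - A) / (A + B) := by field_simp; ring
    have h3 : A * (2 * B / (A + B)) - B = B * (A - B) / (A + B) := by field_simp; ring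
    rw [h2, h3] at h1
    have h4 : 0 < (B - A) / (A + B) := div_pos (by linarith) hs
    have h5 : B * (A - B) / (A + B) < 0 :=
      div_neg_of_neg_of_pos (mul_neg_of_pos_of_neg (by linarith) (by linarith)) hs
    have := mul_neg_of_pos_of_neg h4 h5
    linarith
  · linarith
  · have hs : 0 < A := by linarith
    have h1 := key ((A + B) / (2 * A)) (by positivity)
    have h2 : (A + B) / (2 * A) - 1 = (B - A) / (2 * A) := by field_simp; ring
    have h3 : A * ((A + B) / (2 * A)) - B = (A - B) / 2 := by field_simp; ring
    rw [h2, h3] at h1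
    have h4 : (B - A) / (2 * A) < 0 := div_neg_of_neg_of_pos (by linarith) (by linarith)
    have := mul_neg_of_neg_of_pos h4 (show 0 < (A - B) / 2 by linarith)
    linarith

lemma EL_point (w : Wells W Zm Zp d) (hV : ContDiff ℝ 1 V)
    (hWV : ∀ x, x ∉ Zm ∪ Zp → W x = V x - c) {q u : ℝ → Euc N} (h : Adm W Zm Zp q u)
    (hmin : ∀ q1 u1, Adm W Zm Zp q1 u1 → J W q u ≤ J W q1 u1) {t : ℝ}
    (hq : q t ∉ Zm ∪ Zp) :
    DifferentiableAt ℝ q t ∧ HasDerivAt (deriv q) (gradient V (q t)) t := by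
  have hqc := h.toCore.cont w.nonneg
  have hopen : IsOpen (q ⁻¹' (Zm ∪ Zp)ᶜ) :=
    (w.cm.isClosed.union w.cp.isClosed).isOpen_compl.preimage hqc
  obtain ⟨δ, hδ, hsub⟩ := Metric.isOpen_iff.1 hopen t hq
  have hIcc : ∀ s ∈ Icc (t - δ / 2) (t + δ / 2), q s ∉ Zm ∪ Zp := by
    intro s hs
    refine hsub ?_
    rw [mem_ball, Real.dist_eq, abs_lt]
    constructor <;> linarith [hs.1, hs.2]
  obtain ⟨C, -, hC⟩ := strong_EL w hV hWV h hmin (by linarith) hIcc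
  have ht : t ∈ Ioo (t - δ / 2) (t + δ / 2) := ⟨by linarith, by linarith⟩
  have hgc : Continuous (fun t => gradient V (q t)) := (continuous_grad hV).comp hqc
  refine ⟨(hC t ht).differentiableAt, ?_⟩
  have hd : HasDerivAt (fun t' => C + ∫ s in (t - δ / 2)..t', gradient V (q s))
      (gradient V (q t)) t :=
    (intervalIntegral.integral_hasDerivAt_right (hgc.intervalIntegrable _ _)
      (hgc.stronglyMeasurableAtFilter _ _) hgc.continuousAt).const_add _
  refine hd.congr_of_eventuallyEq ?_
  filter_upwards [isOpen_Ioo.mem_nhds ht] with s hs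
  exact (hC s hs).deriv

lemma ae_deriv (w : Wells W Zm Zp d) {q u : ℝ → Euc N} (h : Adm W Zm Zp q u) :
    ∀ᵐ t, u t = deriv q t := by
  have huL : LocallyIntegrable u volume :=
    (h.toCore.memLp w.nonneg).locallyIntegrable (by norm_num)
  filter_upwards [_root_.LocallyIntegrable.ae_hasDerivAt_integral huL] with t ht
  have h1 : HasDerivAt (fun s => q 0 + ∫ τ in (0:ℝ)..s, u τ) (u t) t := (ht 0).const_add _
  have h2 : q = fun s => q 0 + ∫ τ in (0:ℝ)..s, u τ := by
    funext s; rw [← h.ftc 0 s]; abel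
  rw [← h2] at h1
  exact h1.deriv.symm

lemma left_int {q : ℝ → Euc N} {Z : Set (Euc N)} (hq : Continuous q) (hZ : IsClosed Z)
    (h0 : q 0 ∉ Z) : ∃ IL : Set ℝ, (IL = univ ∨ ∃ α < 0, IL = Ioi α ∧ q α ∈ Z) ∧
      ∀ t ∈ IL, t ≤ 0 → q t ∉ Z := by
  by_cases hex : ∃ t ≤ 0, q t ∈ Z
  · obtain ⟨t, ht, htZ⟩ := hex
    set S := {s : ℝ | s ≤ 0 ∧ q s ∈ Z} with hS
    have hcl : IsClosed S := isClosed_Iic.inter (hZ.preimage hq)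
    have hbd : BddAbove S := ⟨0, fun s hs => hs.1⟩
    have hmem := hcl.csSup_mem ⟨t, ht, htZ⟩ hbd
    refine ⟨Ioi (sSup S), Or.inr ⟨sSup S, lt_of_le_of_ne hmem.1 ?_, rfl, hmem.2⟩, ?_⟩
    · intro he; apply h0; rw [← he]; exact hmem.2
    · intro s hs hs0 hsZ
      exact absurd (le_csSup hbd (show s ∈ S from ⟨hs0, hsZ⟩)) (not_le.2 hs)
  · push Not at hex
    exact ⟨univ, Or.inl rfl, fun t _ ht => hex t ht⟩

lemma exists_sol (w : Wells W Zm Zp d) (hV : ContDiff ℝ 1 V)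
    (hWV : ∀ x, x ∉ Zm ∪ Zp → W x = V x - c) :
    ∃ (q : ℝ → Euc N) (IL IR : Set ℝ), Continuous q ∧
      (∀ ε > 0, ∃ᶠ t in atBot, infDist (q t) Zm < ε) ∧
      (∀ ε > 0, ∃ᶠ t in atTop, infDist (q t) Zp < ε) ∧
      (IL = univ ∨ ∃ α < 0, IL = Ioi α ∧ q α ∈ Zm) ∧
      (IR = univ ∨ ∃ ω > 0, IR = Iio ω ∧ q ω ∈ Zp) ∧
      ∀ t ∈ IL ∩ IR, LS V c q t ∧ q t ∉ Zm ∪ Zp := by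
  obtain ⟨q, u, h, hmin, hnp, hnm⟩ := w.exists_min
  have hqc := h.toCore.cont w.nonneg
  obtain ⟨IL, hIL, hLZ⟩ := left_int hqc w.cm.isClosed (hnm 0 le_rfl)
  obtain ⟨IR', hIR', hRZ'⟩ := left_int (q := fun t => q (-t)) (hqc.comp continuous_neg)
    w.cp.isClosed (by simpa using hnp 0 le_rfl)
  have hR : ∃ IR : Set ℝ, (IR = univ ∨ ∃ ω > 0, IR = Iio ω ∧ q ω ∈ Zp) ∧
      ∀ t ∈ IR, 0 ≤ t → q t ∉ Zp := by
    rcases hIR' with rfl | ⟨α, hα, rfl, hαZ⟩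
    · exact ⟨univ, Or.inl rfl, fun t _ ht => by simpa using hRZ' (-t) (mem_univ _) (by linarith)⟩
    · refine ⟨Iio (-α), Or.inr ⟨-α, by linarith, rfl, hαZ⟩, fun t ht h0 => ?_⟩
      have ht' : t < -α := ht
      simpa using hRZ' (-t) (show α < -t by linarith) (by linarith)
  obtain ⟨IR, hIR, hRZ⟩ := hR
  have hZ : ∀ t ∈ IL ∩ IR, q t ∉ Zm ∪ Zp := by
    rintro t ⟨htL, htR⟩ (hm | hp)
    · rcases le_total t 0 with h0 | h0
      · exact hLZ t htL h0 hm
      · exact hnm t h0 hm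
    · rcases le_total t 0 with h0 | h0
      · exact hnp t h0 hp
      · exact hRZ t htR h0 hp
  have hEL : ∀ t ∈ IL ∩ IR, _ := fun t ht => EL_point w hV hWV h hmin (hZ t ht)
  have oL : IsOpen IL := by
    rcases hIL with rfl | ⟨α, -, rfl, -⟩
    exacts [isOpen_univ, isOpen_Ioi]
  have oR : IsOpen IR := by
    rcases hIR with rfl | ⟨α, -, rfl, -⟩
    exacts [isOpen_univ, isOpen_Iio]
  have cL : OrdConnected IL := by
    rcases hIL with rfl | ⟨α, -, rfl, -⟩
    exacts [ordConnected_univ, ordConnected_Ioi]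
  have cR : OrdConnected IR := by
    rcases hIR with rfl | ⟨α, -, rfl, -⟩
    exacts [ordConnected_univ, ordConnected_Iio]
  have zL : (0:ℝ) ∈ IL := by
    rcases hIL with rfl | ⟨α, h0, rfl, -⟩
    exacts [mem_univ _, h0]
  have zR : (0:ℝ) ∈ IR := by
    rcases hIR with rfl | ⟨α, h0, rfl, -⟩
    exacts [mem_univ _, h0]
  have aL : ∀ᵐ t, t ∉ IL → 2⁻¹ * ‖u t‖ ^ 2 - W (q t) = 0 := by
    rcases hIL with rfl | ⟨α, h0, rfl, hz⟩
    · exact Eventually.of_forall fun t ht => absurd (mem_univ t) ht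
    · filter_upwards [left_zero w h hmin hz] with t ht ht'
      exact ht (not_lt.1 ht')
  have aR : ∀ᵐ t, t ∉ IR → 2⁻¹ * ‖u t‖ ^ 2 - W (q t) = 0 := by
    rcases hIR with rfl | ⟨α, h0, rfl, hz⟩
    · exact Eventually.of_forall fun t ht => absurd (mem_univ t) ht
    · filter_upwards [right_zero w h hmin hz] with t ht ht'
      exact ht (not_lt.1 ht')
  set I := IL ∩ IR with hI
  have oI : IsOpen I := oL.inter oR
  have cI : IsPreconnected I := (cL.inter cR).isPreconnected
  have zI : (0:ℝ) ∈ I := ⟨zL, zR⟩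
  set En : ℝ → ℝ := fun t => 2⁻¹ * ‖deriv q t‖ ^ 2 - V (q t) with hEn
  have hEd : ∀ t ∈ I, HasDerivAt En 0 t := by
    intro t ht
    obtain ⟨h1, h2⟩ := hEL t ht
    have h3 := (h2.norm_sq.const_mul (2⁻¹ : ℝ)).sub (hasDerivAt_comp_grad hV h1.hasDerivAt)
    have h4 : 2⁻¹ * (2 * inner ℝ (deriv q t) (gradient V (q t))) -
        inner ℝ (gradient V (q t)) (deriv q t) = 0 := by
      rw [real_inner_comm]; ring
    rw [h4] at h3
    exact h3
  have hEc : ∀ t ∈ I, En t = En 0 := fun t ht =>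
    oI.is_const_of_deriv_eq_zero cI (fun s hs => (hEd s hs).differentiableAt.differentiableWithinAt)
      (fun s hs => (hEd s hs).deriv) ht zI
  have hDI : ∀ᵐ t, 2⁻¹ * ‖u t‖ ^ 2 - W (q t) = I.indicator (fun _ => En 0 + c) t := by
    filter_upwards [aL, aR, ae_deriv w h] with t h1 h2 h3
    by_cases ht : t ∈ I
    · rw [indicator_of_mem ht, ← hEc t ht, h3, hWV _ (hZ t ht)]
      simp only [hEn]; ring
    · rw [indicator_of_notMem ht]
      by_cases hL : t ∈ IL
      · exact h2 fun hR => ht ⟨hL, hR⟩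
      · exact h1 hL
  have hDint : Integrable (fun t => 2⁻¹ * ‖u t‖ ^ 2 - W (q t)) volume :=
    ((h.toCore.intU w.nonneg).const_mul _).sub (h.toCore.intW w.nonneg)
  have hE0 : En 0 + c = 0 := by
    have h1 := virial w h hmin
    rw [integral_congr_ae hDI, integral_indicator oI.measurableSet, setIntegral_const] at h1
    have h2 := hDint.congr hDI
    rw [integrable_indicator_iff oI.measurableSet, integrableOn_const_iff] at h2
    rcases h2 with h2 | h2
    · exact enorm_eq_zero.1 h2
    · rcases smul_eq_zero.1 h1 with h3 | h3
      · exfalso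
        have h4 : 0 < volume I := oI.measure_pos _ ⟨0, zI⟩
        rw [Measure.real, ENNReal.toReal_eq_zero_iff] at h3
        rcases h3 with h3 | h3
        · exact h4.ne' h3
        · exact h2.ne h3
      · exact h3
  refine ⟨q, IL, IR, hqc, h.left, h.right, hIL, hIR, fun t ht => ⟨⟨(hEL t ht).1, (hEL t ht).2, ?_⟩,
    hZ t ht⟩⟩
  have := hEc t ht
  simp only [hEn] at this hE0
  linarith

end

section
variable {N : ℕ} {W : Euc N → ℝ} {Zm Zp : Set (Euc N)} {d : ℝ} {V : Euc N → ℝ} {c : ℝ}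

lemma LS.congr {p p1 : ℝ → Euc N} {t : ℝ} (h : LS V c p t) (he : p1 =ᶠ[𝓝 t] p) : LS V c p1 t := by
  obtain ⟨h1, h2, h3⟩ := h
  refine ⟨h1.congr_of_eventuallyEq he, ?_, ?_⟩
  · rw [he.eq_of_nhds]
    exact h2.congr_of_eventuallyEq he.deriv
  · rw [he.eq_of_nhds, he.deriv_eq]; exact h3

lemma LS.comp_add {p : ℝ → Euc N} {t k : ℝ} (h : LS V c p (t + k)) :
    LS V c (fun s => p (s + k)) t := by
  obtain ⟨h1, h2, h3⟩ := h
  have hd : deriv (fun s => p (s + k)) = fun s => deriv p (s + k) := by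
    funext s; exact deriv_comp_add_const p k s
  refine ⟨(h1.hasDerivAt.comp_add_const t k).differentiableAt, ?_, ?_⟩
  · rw [hd]; exact h2.comp_add_const t k
  · rw [hd]; exact h3

lemma LS.comp_sub {p : ℝ → Euc N} {t k : ℝ} (h : LS V c p (k - t)) :
    LS V c (fun s => p (k - s)) t := by
  obtain ⟨h1, h2, h3⟩ := h
  have hd : deriv (fun s => p (k - s)) = fun s => - deriv p (k - s) := by
    funext s; exact deriv_comp_const_sub p k s
  refine ⟨(h1.hasDerivAt.comp_const_sub k t).differentiableAt, ?_, ?_⟩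
  · rw [hd]
    have := (h2.comp_const_sub k t).neg
    rw [neg_neg] at this
    exact this
  · rw [hd, norm_neg]; exact h3

lemma hd_of_tendsto {f : ℝ → Euc N} {a : ℝ} {e : Euc N} (hf : ContinuousAt f a)
    (hd : ∀ᶠ s in 𝓝[≠] a, DifferentiableAt ℝ f s) (hl : Tendsto (deriv f) (𝓝[≠] a) (𝓝 e)) :
    HasDerivAt f e a := by
  have h1 : HasDerivWithinAt f e (Ici a) a :=
    hasDerivWithinAt_Ici_of_tendsto_deriv (s := {s | DifferentiableAt ℝ f s})
      (fun s hs => DifferentiableAt.differentiableWithinAt hs) hf.continuousWithinAt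
      (nhdsWithin_mono a (fun x hx => ne_of_gt hx) hd)
      (hl.mono_left (nhdsWithin_mono a (fun x hx => ne_of_gt hx)))
  have h2 : HasDerivWithinAt f e (Iic a) a :=
    hasDerivWithinAt_Iic_of_tendsto_deriv (s := {s | DifferentiableAt ℝ f s})
      (fun s hs => DifferentiableAt.differentiableWithinAt hs) hf.continuousWithinAt
      (nhdsWithin_mono a (fun x hx => ne_of_lt hx) hd)
      (hl.mono_left (nhdsWithin_mono a (fun x hx => ne_of_lt hx)))
  have h3 := h2.union h1
  rw [Iic_union_Ici, hasDerivWithinAt_univ] at h3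
  exact h3

lemma LS.removable (hV : ContDiff ℝ 1 V) {p : ℝ → Euc N} {t : ℝ} (hp : ContinuousAt p t)
    (hc : V (p t) = c) (h : ∀ᶠ s in 𝓝[≠] t, LS V c p s) : LS V c p t := by
  have hp' : Tendsto p (𝓝[≠] t) (𝓝 (p t)) := hp.tendsto.mono_left nhdsWithin_le_nhds
  have h1 : Tendsto (deriv p) (𝓝[≠] t) (𝓝 0) := by
    have h2 : Tendsto (fun s => Real.sqrt (2 * (V (p s) - c))) (𝓝[≠] t) (𝓝 0) := by
      have h3 := (hV.continuous.tendsto (p t)).comp hp'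
      have h4 := (Real.continuous_sqrt.tendsto _).comp ((h3.sub_const c).const_mul 2)
      rw [hc, sub_self, mul_zero, Real.sqrt_zero] at h4
      exact h4
    refine squeeze_zero_norm' (h.mono fun s hs => ?_) h2
    refine Real.le_sqrt_of_sq_le ?_
    linarith [hs.2.2]
  have hd : HasDerivAt p 0 t := hd_of_tendsto hp (h.mono fun s hs => hs.1) h1
  refine ⟨hd.differentiableAt, ?_, ?_⟩
  · refine hd_of_tendsto ?_ (h.mono fun s hs => hs.2.1.differentiableAt) ?_
    · rw [continuousAt_iff_punctured_nhds, hd.deriv]; exact h1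
    · refine Tendsto.congr' (h.mono fun s hs => hs.2.1.deriv.symm) ?_
      exact ((continuous_grad hV).tendsto (p t)).comp hp'
  · rw [hd.deriv, hc]; simp

/-- Good times of a folding map. -/
def Good (I : Set ℝ) (σ : ℝ → ℝ) (t : ℝ) : Prop :=
  σ t ∈ I ∧ ∃ k, (σ =ᶠ[𝓝 t] fun s => s + k) ∨ (σ =ᶠ[𝓝 t] fun s => k - s)

/-- A folding map onto the closure of `I`. -/
structure Fold (I : Set ℝ) (σ : ℝ → ℝ) : Prop where
  cont : Continuous σ
  cases : ∀ t, Good I σ t ∨ (σ t ∈ closure I \ I ∧ ∀ᶠ s in 𝓝[≠] t, Good I σ s)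
  id_on : ∀ t ∈ closure I, σ t = t

lemma fold_univ : Fold univ id := by
  refine ⟨continuous_id, fun t => Or.inl ⟨mem_univ _, 0, Or.inl ?_⟩, fun t _ => rfl⟩
  exact Eventually.of_forall fun s => by simp

lemma fold_Ioi (α : ℝ) : Fold (Ioi α) (fun t => α + |t - α|) := by
  have hg : ∀ t, t ≠ α → Good (Ioi α) (fun t => α + |t - α|) t := by
    intro t ht
    refine ⟨?_, ?_⟩
    · simp [sub_eq_zero, ht]
    · rcases lt_or_gt_of_ne ht with h | h
      · refine ⟨2 * α, Or.inr ?_⟩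
        filter_upwards [eventually_lt_nhds h] with s hs
        rw [abs_of_neg (by linarith)]; ring
      · refine ⟨0, Or.inl ?_⟩
        filter_upwards [eventually_gt_nhds h] with s hs
        rw [abs_of_pos (by linarith)]; ring
  refine ⟨by fun_prop, fun t => ?_, fun t ht => ?_⟩
  · by_cases ht : t = α
    · right
      subst ht
      refine ⟨by simp [closure_Ioi], ?_⟩
      exact eventually_nhdsWithin_of_forall fun s hs => hg s hs
    · exact Or.inl (hg t ht)
  · rw [closure_Ioi, mem_Ici] at ht
    rw [abs_of_nonneg (by linarith)]; ring

lemma fold_Iio (α : ℝ) : Fold (Iio α) (fun t => α - |t - α|) := by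
  have hg : ∀ t, t ≠ α → Good (Iio α) (fun t => α - |t - α|) t := by
    intro t ht
    refine ⟨?_, ?_⟩
    · simp [sub_eq_zero, ht]
    · rcases lt_or_gt_of_ne ht with h | h
      · refine ⟨0, Or.inl ?_⟩
        filter_upwards [eventually_lt_nhds h] with s hs
        rw [abs_of_neg (by linarith)]; ring
      · refine ⟨2 * α, Or.inr ?_⟩
        filter_upwards [eventually_gt_nhds h] with s hs
        rw [abs_of_pos (by linarith)]; ring
  refine ⟨by fun_prop, fun t => ?_, fun t ht => ?_⟩
  · by_cases ht : t = α
    · right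
      subst ht
      refine ⟨by simp [closure_Iio], ?_⟩
      exact eventually_nhdsWithin_of_forall fun s hs => hg s hs
    · exact Or.inl (hg t ht)
  · rw [closure_Iio, mem_Iic] at ht
    rw [abs_of_nonpos (by linarith)]; ring

lemma fold_Ioo {α ω : ℝ} (h : α < ω) : ∃ σ, Fold (Ioo α ω) σ := by
  set l := ω - α with hl
  have hl0 : 0 < l := by linarith
  set σ : ℝ → ℝ := fun t => α + ‖((t - α : ℝ) : AddCircle (2 * l))‖ with hσ
  have F : ∀ (n : ℤ) (s : ℝ), |s - α - n * (2 * l)| ≤ l → σ s = α + |s - α - n * (2 * l)| := by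
    intro n s hs
    have h1 : ((n * (2 * l) : ℝ) : AddCircle (2 * l)) = 0 :=
      (AddCircle.coe_eq_zero_iff _).2 ⟨n, by simp⟩
    have h2 : ((s - α : ℝ) : AddCircle (2 * l)) = ((s - α - n * (2 * l) : ℝ) : AddCircle (2 * l)) := by
      rw [AddCircle.coe_sub (2 * l) (s - α), h1, sub_zero]
    simp only [hσ]
    rw [h2, (AddCircle.norm_coe_eq_abs_iff (2 * l) (by positivity)).2]
    rw [abs_of_pos (show 0 < 2 * l by linarith)]; linarith
  have G : ∀ (n : ℤ) (s : ℝ), s - α - n * (2 * l) ≠ 0 → |s - α - n * (2 * l)| < l →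
      Good (Ioo α ω) σ s := by
    intro n s h0 hs
    have hcont : Continuous fun s : ℝ => s - α - n * (2 * l) := by fun_prop
    have hev : ∀ᶠ s' in 𝓝 s, |s' - α - n * (2 * l)| < l :=
      (continuous_abs.comp hcont).continuousAt.eventually (eventually_lt_nhds hs)
    refine ⟨?_, ?_⟩
    · rw [F n s hs.le]
      have := abs_pos.2 h0
      exact ⟨by linarith, by linarith⟩
    · rcases lt_or_gt_of_ne h0 with hn | hp
      · refine ⟨2 * α + n * (2 * l), Or.inr ?_⟩
        filter_upwards [hev, hcont.continuousAt.eventually (eventually_lt_nhds hn)] with s' h1 h2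
        rw [F n s' h1.le, abs_of_neg h2]; ring
      · refine ⟨- (n * (2 * l)), Or.inl ?_⟩
        filter_upwards [hev, hcont.continuousAt.eventually (eventually_gt_nhds hp)] with s' h1 h2
        rw [F n s' h1.le, abs_of_pos h2]; ring
  refine ⟨σ, ?_, fun t => ?_, fun t ht => ?_⟩
  · exact continuous_const.add (continuous_norm.comp
      ((AddCircle.continuous_mk' (2 * l)).comp (continuous_id.sub continuous_const)))
  · obtain ⟨n, hn, -⟩ := existsUnique_sub_zsmul_mem_Ioc (show 0 < 2 * l by linarith) (t - α) (-l)
    rw [zsmul_eq_mul] at hn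
    have hn1 := hn.1
    have hn2 : t - α - n * (2 * l) ≤ l := by linarith [hn.2]
    have hcont : Continuous fun s : ℝ => s - α - n * (2 * l) := by fun_prop
    by_cases h0 : t - α - n * (2 * l) = 0
    · right
      refine ⟨?_, ?_⟩
      · rw [F n t (by rw [h0]; simp [hl0.le]), h0, closure_Ioo h.ne]
        simp [h.le]
      · have hev : ∀ᶠ s' in 𝓝 t, |s' - α - n * (2 * l)| < l :=
          (continuous_abs.comp hcont).continuousAt.eventually
            (eventually_lt_nhds (by simp only [Function.comp]; rw [h0]; simpa using hl0))
        filter_upwards [hev.filter_mono nhdsWithin_le_nhds, self_mem_nhdsWithin] with s h1 h2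
        refine G n s (fun h3 => h2 ?_) h1
        exact mem_singleton_iff.2 (by linarith)
    · by_cases h1 : t - α - n * (2 * l) = l
      · right
        refine ⟨?_, ?_⟩
        · rw [F n t (by rw [h1, abs_of_pos hl0]), h1, closure_Ioo h.ne, abs_of_pos hl0]
          have : α + l = ω := by rw [hl]; ring
          rw [this]
          simp [h.le]
        · have hev : ∀ᶠ s' in 𝓝 t, 0 < s' - α - n * (2 * l) :=
            hcont.continuousAt.eventually (eventually_gt_nhds (by linarith))
          have hev2 : ∀ᶠ s' in 𝓝 t, s' - α - n * (2 * l) < 2 * l :=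
            hcont.continuousAt.eventually (eventually_lt_nhds (by linarith))
          filter_upwards [hev.filter_mono nhdsWithin_le_nhds,
            hev2.filter_mono nhdsWithin_le_nhds, self_mem_nhdsWithin] with s h2 h3 h4
          have h5 : s ≠ t := h4
          rcases lt_or_gt_of_ne h5 with h6 | h6
          · exact G n s h2.ne' (by rw [abs_of_pos h2]; linarith)
          · have e : s - α - ((n + 1 : ℤ) : ℝ) * (2 * l) = s - α - n * (2 * l) - 2 * l := by
              push_cast; ring
            refine G (n + 1) s ?_ ?_
            · rw [e]; linarith
            · rw [e, abs_lt]; constructor <;> linarith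
      · left
        refine G n t h0 ?_
        rw [abs_lt]
        exact ⟨hn1, lt_of_le_of_ne hn2 h1⟩
  · rw [closure_Ioo h.ne] at ht
    have e : |t - α - ((0 : ℤ) : ℝ) * (2 * l)| = t - α := by
      rw [Int.cast_zero, zero_mul, sub_zero, abs_of_nonneg (by linarith [ht.1])]
    rw [F 0 t (by rw [e]; linarith [ht.2]), e]; ring

lemma fold_LS (hV : ContDiff ℝ 1 V) {q : ℝ → Euc N} (hq : Continuous q) {I : Set ℝ} {σ : ℝ → ℝ}
    (hσ : Fold I σ) (hI : ∀ t ∈ I, LS V c q t) (he : ∀ t ∈ closure I \ I, V (q t) ≤ c) (t : ℝ) :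
    LS V c (fun s => q (σ s)) t := by
  have hgood : ∀ t, Good I σ t → LS V c (fun s => q (σ s)) t := by
    rintro t ⟨h1, k, h2 | h2⟩
    · have h3 := hI _ h1
      rw [h2.eq_of_nhds] at h3
      exact h3.comp_add.congr (h2.mono fun s hs => by simp only [hs])
    · have h3 := hI _ h1
      rw [h2.eq_of_nhds] at h3
      exact h3.comp_sub.congr (h2.mono fun s hs => by simp only [hs])
  rcases hσ.cases t with h | ⟨h1, h2⟩
  · exact hgood t h
  · refine LS.removable hV (hq.comp hσ.cont).continuousAt (le_antisymm (he _ h1) ?_)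
      (h2.mono fun s hs => hgood s hs)
    have hsub : I ⊆ {s | c ≤ V (q s)} := by
      intro s hs
      have h3 := (hI s hs).2.2
      have h4 : 0 ≤ ‖deriv q s‖ ^ 2 := by positivity
      show c ≤ V (q s)
      linarith
    exact closure_minimal hsub (isClosed_le continuous_const (hV.continuous.comp hq)) h1.1

lemma iInf_zero {p : ℝ → Euc N} {Z : Set (Euc N)} (h : ∀ ε > 0, ∃ t, infDist (p t) Z < ε) :
    (⨅ t, infDist (p t) Z) = 0 := by
  have hb : BddBelow (range fun t => infDist (p t) Z) := ⟨0, by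
    rintro _ ⟨t, rfl⟩; exact infDist_nonneg⟩
  refine le_antisymm ?_ (Real.iInf_nonneg fun t => infDist_nonneg)
  refine le_of_forall_pos_lt_add fun ε hε => ?_
  obtain ⟨t, ht⟩ := h ε hε
  rw [zero_add]
  exact (ciInf_le hb t).trans_lt ht

lemma final_sol (w : Wells W Zm Zp d) (hV : ContDiff ℝ 1 V)
    (hWV : ∀ x, x ∉ Zm ∪ Zp → W x = V x - c) (hZ : ∀ x ∈ Zm ∪ Zp, V x ≤ c) :
    ∃ p : ℝ → Euc N, ContDiff ℝ 2 p ∧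
      (∀ t, deriv (deriv p) t = gradient V (p t)) ∧
      (⨅ t : ℝ, infDist (p t) Zm) = 0 ∧
      (⨅ t : ℝ, infDist (p t) Zp) = 0 ∧
      (∀ t, 2⁻¹ * ‖deriv p t‖ ^ 2 - V (p t) = -c) := by
  obtain ⟨q, IL, IR, hq, hl, hr, hIL, hIR, hI⟩ := exists_sol w hV hWV
  have hfold : ∃ σ, Fold (IL ∩ IR) σ := by
    rcases hIL with rfl | ⟨α, hα, rfl, -⟩ <;> rcases hIR with rfl | ⟨ω, hω, rfl, -⟩
    · rw [univ_inter]; exact ⟨_, fold_univ⟩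
    · rw [univ_inter]; exact ⟨_, fold_Iio ω⟩
    · rw [inter_univ]; exact ⟨_, fold_Ioi α⟩
    · rw [Ioi_inter_Iio]; exact fold_Ioo (hα.trans hω)
  obtain ⟨σ, hσ⟩ := hfold
  have hclL : ∀ t ∈ closure IL, t ∉ IL → q t ∈ Zm := by
    intro t ht htn
    rcases hIL with rfl | ⟨α, hα, rfl, hz⟩
    · exact absurd (mem_univ t) htn
    · rw [closure_Ioi] at ht
      have : t = α := le_antisymm (not_lt.1 htn) ht
      rw [this]; exact hz
  have hclR : ∀ t ∈ closure IR, t ∉ IR → q t ∈ Zp := by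
    intro t ht htn
    rcases hIR with rfl | ⟨α, hα, rfl, hz⟩
    · exact absurd (mem_univ t) htn
    · rw [closure_Iio] at ht
      have : t = α := le_antisymm ht (not_lt.1 htn)
      rw [this]; exact hz
  have hend : ∀ t ∈ closure (IL ∩ IR) \ (IL ∩ IR), V (q t) ≤ c := by
    rintro t ⟨h1, h2⟩
    by_cases h3 : t ∈ IL
    · exact hZ _ (Or.inr (hclR t (closure_mono inter_subset_right h1) fun h4 => h2 ⟨h3, h4⟩))
    · exact hZ _ (Or.inl (hclL t (closure_mono inter_subset_left h1) h3))
  have hLS := fold_LS hV hq hσ (fun t ht => (hI t ht).1) hend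
  have hpc : Continuous fun s => q (σ s) := hq.comp hσ.cont
  have hdd : deriv (deriv fun s => q (σ s)) = fun s => gradient V (q (σ s)) := by
    funext t; exact (hLS t).2.1.deriv
  refine ⟨fun s => q (σ s), ?_, fun t => (hLS t).2.1.deriv, ?_, ?_, fun t => ?_⟩
  · have : (2 : WithTop ℕ∞) = 1 + 1 := by norm_num
    rw [this, contDiff_succ_iff_deriv]
    refine ⟨fun t => (hLS t).1, by simp, ?_⟩
    rw [contDiff_one_iff_deriv]
    refine ⟨fun t => (hLS t).2.1.differentiableAt, ?_⟩
    rw [hdd]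
    exact (continuous_grad hV).comp hpc
  · refine iInf_zero fun ε hε => ?_
    rcases hIL with rfl | ⟨α, hα, rfl, hz⟩
    · obtain ⟨t, ht1, ht2⟩ := ((hl ε hε).and_eventually (eventually_le_atBot 0)).exists
      refine ⟨t, ?_⟩
      rw [hσ.id_on t (subset_closure ⟨mem_univ _, ?_⟩)]
      · exact ht1
      · rcases hIR with rfl | ⟨ω, hω, rfl, -⟩
        · exact mem_univ _
        · exact lt_of_le_of_lt ht2 hω
    · refine ⟨α, ?_⟩
      rw [hσ.id_on α, infDist_zero_of_mem hz]
      · exact hε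
      · rcases hIR with rfl | ⟨ω, hω, rfl, -⟩
        · rw [inter_univ, closure_Ioi]; exact self_mem_Ici
        · rw [Ioi_inter_Iio, closure_Ioo (by linarith)]; exact ⟨le_rfl, by linarith⟩
  · refine iInf_zero fun ε hε => ?_
    rcases hIR with rfl | ⟨ω, hω, rfl, hz⟩
    · obtain ⟨t, ht1, ht2⟩ := ((hr ε hε).and_eventually (eventually_ge_atTop 0)).exists
      refine ⟨t, ?_⟩
      rw [hσ.id_on t (subset_closure ⟨?_, mem_univ _⟩)]
      · exact ht1
      · rcases hIL with rfl | ⟨α, hα, rfl, -⟩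
        · exact mem_univ _
        · exact lt_of_lt_of_le hα ht2
    · refine ⟨ω, ?_⟩
      rw [hσ.id_on ω, infDist_zero_of_mem hz]
      · exact hε
      · rcases hIL with rfl | ⟨α, hα, rfl, -⟩
        · rw [univ_inter, closure_Iio]; exact self_mem_Iic
        · rw [Ioi_inter_Iio, closure_Ioo (by linarith)]; exact ⟨by linarith, le_rfl⟩
  · have := (hLS t).2.2
    linarith

end

section
variable {N : ℕ} {V : Euc N → ℝ} {c ν₀ : ℝ} {Vm Vp : Set (Euc N)}

lemma mk_wells (hV : ContDiff ℝ 1 V)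
    (hliminf₁ : ∀ b : ℝ, b < ν₀ → ∃ ρ : ℝ, ∀ x : Euc N, ρ ≤ ‖x‖ → b < V x)
    (hcν : c < ν₀) (hVm : IsClosed Vm) (hVp : IsClosed Vp)
    (hsplit : {x | V x ≤ c} = Vm ∪ Vp) (hsep : 0 < setDist Vm Vp) :
    Wells (fun x => max (V x - c) 0) Vm Vp (setDist Vm Vp) := by
  obtain ⟨ρ, hρ⟩ := hliminf₁ ((c + ν₀) / 2) (by linarith)
  have hbd : Bornology.IsBounded {x | V x ≤ c} := by
    refine (isBounded_iff_forall_norm_le).2 ⟨ρ, fun x hx => ?_⟩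
    by_contra hlt
    have h1 := hρ x (not_le.1 hlt).le
    have h2 : V x ≤ c := hx
    linarith
  have hne : (Vm ×ˢ Vp).Nonempty := by
    by_contra hn
    rw [not_nonempty_iff_eq_empty] at hn
    unfold setDist at hsep
    rw [hn, image_empty, Real.sInf_empty] at hsep
    exact lt_irrefl _ hsep
  obtain ⟨⟨x0, y0⟩, hx0, hy0⟩ := hne
  refine ⟨(hV.continuous.sub continuous_const).max continuous_const, fun x => le_max_right _ _, ?_,
    ?_, ?_, ⟨x0, hx0⟩, ⟨y0, hy0⟩, hsep, ?_, ?_⟩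
  · intro x
    rw [← hsplit]
    simp
  · refine Metric.isCompact_of_isClosed_isBounded hVm (hbd.subset ?_)
    rw [hsplit]; exact subset_union_left
  · refine Metric.isCompact_of_isClosed_isBounded hVp (hbd.subset ?_)
    rw [hsplit]; exact subset_union_right
  · intro x hx y hy
    refine csInf_le ⟨0, ?_⟩ ⟨(x, y), ⟨hx, hy⟩, rfl⟩
    rintro _ ⟨p, -, rfl⟩
    exact dist_nonneg
  · refine ⟨ρ, (ν₀ - c) / 2, by linarith, fun x hx => le_max_of_le_left ?_⟩
    linarith [hρ x hx]

lemma adm_of_gamma {p : (ℝ → Euc N) × (ℝ → Euc N)} (hV : ContDiff ℝ 1 V)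
    (hp : p ∈ Gamma V c Vm Vp) (hfin : lagJ V c p.1 p.2 univ ≠ ∞) :
    Adm (fun x => max (V x - c) 0) Vm Vp p.1 p.2 ∧
      J (fun x => max (V x - c) 0) p.1 p.2 = (lagJ V c p.1 p.2 univ).toReal := by
  obtain ⟨⟨h1, h2, h3⟩, h4, h5, h6⟩ := hp
  have hW : ∀ t, max (V (p.1 t) - c) 0 = V (p.1 t) - c := fun t =>
    max_eq_left (by linarith [h4 t])
  have hqc : Continuous p.1 := cont_of_ftc
    (fun a b => (h1.integrableOn_isCompact isCompact_uIcc).intervalIntegrable) h3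
  have hum : AEStronglyMeasurable p.2 volume := h1.aestronglyMeasurable
  have hm : AEStronglyMeasurable (fun t => 2⁻¹ * ‖p.2 t‖ ^ 2 + (V (p.1 t) - c)) volume :=
    ((hum.norm.pow 2).const_mul _).add
      ((hV.continuous.comp hqc).sub continuous_const).aestronglyMeasurable
  have hnn : ∀ t, 0 ≤ 2⁻¹ * ‖p.2 t‖ ^ 2 + (V (p.1 t) - c) := fun t => by
    have : 0 ≤ ‖p.2 t‖ ^ 2 := by positivity
    linarith [h4 t]
  have hi : Integrable (fun t => 2⁻¹ * ‖p.2 t‖ ^ 2 + (V (p.1 t) - c)) volume := by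
    refine ⟨hm, (hasFiniteIntegral_iff_ofReal (Eventually.of_forall hnn)).2 ?_⟩
    have := lt_top_iff_ne_top.2 hfin
    unfold lagJ at this
    rwa [Measure.restrict_univ] at this
  refine ⟨⟨⟨hum, ?_, h3⟩, h5, h6⟩, ?_⟩
  · simp only [hW]; exact hi
  · unfold J lagJ
    simp only [hW]
    rw [Measure.restrict_univ, integral_eq_lintegral_of_nonneg_ae (Eventually.of_forall hnn) hm]

lemma coercive_of (hV : ContDiff ℝ 1 V) {d : ℝ}
    (w : Wells (fun x => max (V x - c) 0) Vm Vp d) : ∃ R > (0 : ℝ), Coercive V c Vm Vp R := by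
  by_cases htop : mc V c Vm Vp = ∞
  · refine ⟨1, one_pos, ?_⟩
    unfold Coercive
    refine le_antisymm ?_ (by rw [htop]; exact le_top)
    unfold mc
    exact le_iInf fun p => le_iInf fun hp => le_iInf fun _ => iInf₂_le p hp
  · obtain ⟨R, hR, hb⟩ := w.bound (mc V c Vm Vp + 1).toReal
    refine ⟨R, hR, ?_⟩
    have hbound : ∀ p ∈ Gamma V c Vm Vp, lagJ V c p.1 p.2 univ < mc V c Vm Vp + 1 →
        ∀ t, ‖p.1 t‖ ≤ R := by
      intro p hp hlt
      obtain ⟨h1, h2⟩ := adm_of_gamma hV hp hlt.ne_top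
      refine hb _ _ h1 ?_
      rw [h2]
      exact ENNReal.toReal_mono (by simp [htop]) hlt.le
    unfold Coercive
    refine le_antisymm ?_ ?_
    · unfold mc
      exact le_iInf fun p => le_iInf fun hp => le_iInf fun _ => iInf₂_le p hp
    · have hlt : mc V c Vm Vp < mc V c Vm Vp + 1 := ENNReal.lt_add_right htop one_ne_zero
      have hex : ∃ p0, ∃ (_ : p0 ∈ Gamma V c Vm Vp), lagJ V c p0.1 p0.2 univ < mc V c Vm Vp + 1 := by
        by_contra hno
        push Not at hno
        have : mc V c Vm Vp + 1 ≤ mc V c Vm Vp := by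
          conv_rhs => unfold mc
          exact le_iInf₂ fun p hp => hno p hp
        exact absurd this (not_le.2 hlt)
      obtain ⟨p0, hp0, hp0l⟩ := hex
      conv_rhs => unfold mc
      refine le_iInf₂ fun p hp => ?_
      rcases lt_or_ge (lagJ V c p.1 p.2 univ) (mc V c Vm Vp + 1) with h1 | h1
      · exact (iInf_le _ p).trans ((iInf_le _ hp).trans (iInf_le _ (hbound p hp h1)))
      · refine le_trans ?_ (hp0l.le.trans h1)
        exact (iInf_le _ p0).trans ((iInf_le _ hp0).trans (iInf_le _ (hbound p0 hp0 hp0l)))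

end

end DW

/-- Proposition 3.1 (double-well potentials): for `c ∈ [0, ν₀)` such that `(V^c)` holds,
the coercivity condition (1.7) holds, and there is a connecting solution with energy `−c`. -/
theorem doublewell_existence {N : ℕ} (hN : 0 < N) (V : Euc N → ℝ) (hV : ContDiff ℝ 1 V)
    (am ap : Euc N) (hne : am ≠ ap) (hVam : V am = 0) (hVap : V ap = 0)
    (hVpos : ∀ x, x ≠ am → x ≠ ap → 0 < V x)
    (ν₀ : ℝ) (hν₀ : 0 < ν₀)
    (hliminf₁ : ∀ b : ℝ, b < ν₀ → ∃ ρ : ℝ, ∀ x : Euc N, ρ ≤ ‖x‖ → b < V x)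
    (hliminf₂ : ∀ b : ℝ, ν₀ < b → ∀ ρ : ℝ, ∃ x : Euc N, ρ ≤ ‖x‖ ∧ V x < b)
    (c : ℝ) (hc0 : 0 ≤ c) (hcν : c < ν₀)
    (Vm Vp : Set (Euc N)) (hVm : IsClosed Vm) (hVp : IsClosed Vp)
    (hsplit : {x | V x ≤ c} = Vm ∪ Vp) (hsep : 0 < setDist Vm Vp) :
    (∃ R > (0 : ℝ), Coercive V c Vm Vp R) ∧
    ∃ q : ℝ → Euc N, ContDiff ℝ 2 q ∧
      (∀ t, deriv (deriv q) t = gradient V (q t)) ∧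
      (⨅ t : ℝ, infDist (q t) Vm) = 0 ∧
      (⨅ t : ℝ, infDist (q t) Vp) = 0 ∧
      (∀ t, 2⁻¹ * ‖deriv q t‖ ^ 2 - V (q t) = -c) := by
  have w := DW.mk_wells hV hliminf₁ hcν hVm hVp hsplit hsep
  refine ⟨DW.coercive_of hV w, DW.final_sol (c := c) w hV ?_ ?_⟩
  · intro x hx
    rw [← hsplit] at hx
    have h1 : c < V x := not_le.1 hx
    exact max_eq_left (by linarith)
  · intro x hx
    rw [← hsplit] at hx
    exact hx
end
end

section
/- Assume V ∈ C¹(ℝ^N) satisfies (V1) and (V2), and let c_dw ∈ (0, ν₀) be such that for every c ∈ [0, c_dw) condition (V^c) holds with compact sets satisfying a₋ ∈ 𝒱^c₋ ⊆ B_{ϱ₀}(a₋) and a₊ ∈ 𝒱^c₊ ⊆ B_{ϱ₀}(a₊), where ϱ₀ := |a₋ − a₊|/4. Then there exists R_dw > 0 such that for every c ∈ [0, c_dw), every C² solution q of q̈ = ∇V(q) on ℝ with ½|q̇(t)|² − V(q(t)) = −c for all t which admits a connecting time interval (α, ω) ⊆ ℝ (with −∞ ≤ α < ω ≤ +∞)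 satisfying: V(q(t)) > c on (α, ω); dist(q(t), 𝒱^c₋) → 0 as t → α⁺; dist(q(t), 𝒱^c₊) → 0 as t → ω⁻; J_{c,(α,ω)}(q) = m_c; and ‖q‖_{L^∞(ℝ,ℝ^N)} = ‖q‖_{L^∞((α,ω),ℝ^N)}, satisfies ‖q‖_{L^∞(ℝ,ℝ^N)} ≤ R_dw. -/
open MeasureTheory Filter Metric Set Topology
open scoped ENNReal

noncomputable section

theorem dw_travel {N : ℕ} (q : ℝ → Euc N) (hq : ContDiff ℝ 2 q) (k M : ℝ) (hk : 0 ≤ k)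
    (hM : 0 ≤ M) (g : ℝ → ℝ) (a b : ℝ) (hab : a ≤ b)
    (h1 : ∀ s ∈ Ioo a b, k * ‖deriv q s‖ ≤ g s)
    (h2 : ∫⁻ s in Ioo a b, ENNReal.ofReal (g s) ≤ ENNReal.ofReal M) :
    k * ‖q b - q a‖ ≤ M := by
  have hd : Continuous (deriv q) := hq.continuous_deriv (by norm_num)
  have hdiff : Differentiable ℝ q := hq.differentiable (by norm_num)
  have e1 : ∫ s in a..b, deriv q s = q b - q a :=
    intervalIntegral.integral_deriv_eq_sub (fun x _ => hdiff x) (hd.intervalIntegrable _ _)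
  have e2 : k * ‖q b - q a‖ ≤ ∫ s in Ioo a b, k * ‖deriv q s‖ := by
    rw [← e1, integral_const_mul, ← integral_Ioc_eq_integral_Ioo,
      ← intervalIntegral.integral_of_le hab]
    exact mul_le_mul_of_nonneg_left (intervalIntegral.norm_integral_le_integral_norm hab) hk
  have hint : IntegrableOn (fun s => k * ‖deriv q s‖) (Ioo a b) :=
    ((continuous_const.mul hd.norm).integrableOn_Icc).mono_set Ioo_subset_Icc_self
  have e3 := ofReal_integral_eq_lintegral_ofReal hint
    (Eventually.of_forall fun s => mul_nonneg hk (norm_nonneg _))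
  have e4 : ENNReal.ofReal (k * ‖q b - q a‖) ≤ ENNReal.ofReal M := by
    refine (ENNReal.ofReal_le_ofReal e2).trans ?_
    rw [e3]
    refine le_trans ?_ h2
    exact setLIntegral_mono' measurableSet_Ioo fun s hs => ENNReal.ofReal_le_ofReal (h1 s hs)
  exact (ENNReal.ofReal_le_ofReal_iff hM).1 e4

theorem dw_mc_le {N : ℕ} (V : Euc N → ℝ) (hV : Continuous V) (am ap : Euc N) (hne : am ≠ ap)
    (c : ℝ) (hc : 0 ≤ c) (Vm Vp : Set (Euc N)) (hm : IsCompact Vm) (hp : IsCompact Vp)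
    (hu : {x | V x ≤ c} = Vm ∪ Vp) (ham : am ∈ Vm) (hmb : Vm ⊆ ball am (dist am ap / 4))
    (hap : ap ∈ Vp) (hpb : Vp ⊆ ball ap (dist am ap / 4)) (K : ℝ) (hK0 : 0 ≤ K)
    (hK : ∀ s ∈ Icc (0 : ℝ) 1, V (am + s • (ap - am)) ≤ K) :
    mc V c Vm Vp ≤ ENNReal.ofReal (2⁻¹ * ‖ap - am‖ ^ 2 + K) := by
  set l : ℝ → Euc N := fun s => am + s • (ap - am) with hl
  have hlc : Continuous l := by fun_prop
  have hdpos : 0 < dist am ap := dist_pos.2 hne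
  have hdisj : ∀ x, x ∈ Vm → x ∈ Vp → False := by
    intro x h1 h2
    have h1 := mem_ball.1 (hmb h1)
    have h2 := mem_ball.1 (hpb h2)
    have := dist_triangle_left am ap x
    linarith
  -- last exit from Vm
  have hA : IsCompact {s | s ∈ Icc (0 : ℝ) 1 ∧ l s ∈ Vm} :=
    isCompact_Icc.inter_right (hm.isClosed.preimage hlc)
  obtain ⟨s1, ⟨hs1I, hs1m⟩, hs1max⟩ := hA.exists_isMaxOn ⟨0, by simp [hl, ham]⟩ continuousOn_id
  have hB : IsCompact {s | s ∈ Icc s1 (1 : ℝ) ∧ l s ∈ Vp} :=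
    isCompact_Icc.inter_right (hp.isClosed.preimage hlc)
  obtain ⟨s2, ⟨hs2I, hs2p⟩, hs2min⟩ := hB.exists_isMinOn
    ⟨1, by simp [hl, hap, hs1I.2]⟩ continuousOn_id
  have hlt : s1 < s2 := by
    rcases hs2I.1.lt_or_eq with h | h
    · exact h
    · exact (hdisj _ hs1m (h ▸ hs2p)).elim
  have hin : ∀ s ∈ Ioo s1 s2, c < V (l s) := by
    intro s hs
    by_contra hcon
    have : l s ∈ Vm ∪ Vp := by rw [← hu]; exact not_lt.1 hcon
    rcases this with h | h
    · have h3 := hs1max (show s ∈ _ from ⟨⟨hs1I.1.trans hs.1.le, hs.2.le.trans hs2I.2⟩, h⟩)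
      simp only [id, mem_ofPred_eq] at h3
      exact absurd hs.1 (not_lt.2 h3)
    · have h3 := hs2min (show s ∈ _ from ⟨⟨hs.1.le, hs.2.le.trans hs2I.2⟩, h⟩)
      simp only [id, mem_ofPred_eq] at h3
      exact absurd hs.2 (not_lt.2 h3)
  have hin' : ∀ s ∈ Icc s1 s2, c ≤ V (l s) := by
    have hcl : IsClosed {s | c ≤ V (l s)} := isClosed_le continuous_const (hV.comp hlc)
    have : closure (Ioo s1 s2) ⊆ {s | c ≤ V (l s)} :=
      hcl.closure_subset_iff.2 fun s hs => (hin s hs).le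
    rwa [closure_Ioo hlt.ne] at this
  have hV1 : V (l s1) ≤ c := by
    have : l s1 ∈ {x | V x ≤ c} := by rw [hu]; exact Or.inl hs1m
    exact this
  have hV2 : V (l s2) ≤ c := by
    have : l s2 ∈ {x | V x ≤ c} := by rw [hu]; exact Or.inr hs2p
    exact this
  set p : ℝ → Euc N := fun t => l (max s1 (min s2 t)) with hpdef
  set p' : ℝ → Euc N := (Ioo s1 s2).indicator (fun _ => ap - am) with hp'
  have hpc : Continuous p := by rw [hpdef]; fun_prop
  have hint : Integrable p' := by
    rw [hp', integrable_indicator_iff measurableSet_Ioo]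
    exact integrableOn_const (by simp)
  have hlo : ∀ t, t ≤ s1 → p t = l s1 := fun t ht => by
    simp only [hpdef]
    rw [min_eq_right (ht.trans hlt.le), max_eq_left ht]
  have hhi : ∀ t, s2 ≤ t → p t = l s2 := fun t ht => by
    simp only [hpdef]
    rw [min_eq_left ht, max_eq_right hlt.le]
  have hmid : ∀ t ∈ Icc s1 s2, p t = l t := fun t ht => by
    simp only [hpdef]
    rw [min_eq_right ht.2, max_eq_right ht.1]
  have hder : ∀ t, t ∉ ({s1, s2} : Set ℝ) → HasDerivAt p (p' t) t := by
    intro t ht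
    simp only [mem_insert_iff, mem_singleton_iff, not_or] at ht
    rcases lt_or_gt_of_ne ht.1 with h | h
    · have : p' t = 0 := indicator_of_notMem (fun h' => absurd h'.1 (not_lt.2 h.le)) _
      rw [this]
      refine (hasDerivAt_const t (l s1)).congr_of_eventuallyEq ?_
      filter_upwards [Iio_mem_nhds h] with x hx using hlo x (le_of_lt hx)
    rcases lt_or_gt_of_ne ht.2 with h2 | h2
    · have : p' t = ap - am := indicator_of_mem (show t ∈ Ioo s1 s2 from ⟨h, h2⟩) _
      rw [this]
      have hd : HasDerivAt l (ap - am) t := by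
        have h7 := ((hasDerivAt_id t).smul_const (ap - am)).const_add am
        rw [one_smul] at h7
        exact h7
      refine hd.congr_of_eventuallyEq ?_
      filter_upwards [Ioo_mem_nhds h h2] with x hx using hmid x (Ioo_subset_Icc_self hx)
    · have : p' t = 0 := indicator_of_notMem (fun h' => absurd h'.2 (not_lt.2 h2.le)) _
      rw [this]
      refine (hasDerivAt_const t (l s2)).congr_of_eventuallyEq ?_
      filter_upwards [Ioi_mem_nhds h2] with x hx using hhi x (le_of_lt hx)
  have hmem : (p, p') ∈ Gamma V c Vm Vp := by
    refine ⟨⟨hint.locallyIntegrable, ?_, ?_⟩, ?_, ?_, ?_⟩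
    · intro a b
      have : (fun t => ‖p' t‖ ^ 2) = (Ioo s1 s2).indicator (fun _ => ‖ap - am‖ ^ 2) := by
        ext t
        by_cases h : t ∈ Ioo s1 s2 <;> simp [hp', h]
      show IntegrableOn (fun t => ‖p' t‖ ^ 2) _ _
      rw [this]
      apply Integrable.integrableOn
      rw [integrable_indicator_iff measurableSet_Ioo]
      exact integrableOn_const (by simp)
    · intro a b
      refine (MeasureTheory.integral_eq_of_hasDerivAt_off_countable _ _
        (((countable_singleton s2).insert s1)) hpc.continuousOn (fun x hx => hder x hx.2)
        hint.intervalIntegrable).symm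
    · intro t
      refine hin' _ ⟨le_max_left _ _, max_le hlt.le (min_le_left _ _)⟩
    · intro ε hε
      apply Eventually.frequently
      filter_upwards [eventually_le_atBot s1] with t ht
      show infDist (p t) Vm < ε
      rw [hlo t ht, infDist_zero_of_mem hs1m]
      exact hε
    · intro ε hε
      apply Eventually.frequently
      filter_upwards [eventually_ge_atTop s2] with t ht
      show infDist (p t) Vp < ε
      rw [hhi t ht, infDist_zero_of_mem hs2p]
      exact hε
  refine (iInf₂_le (p, p') hmem).trans ?_
  have hbound : ∀ t, ENNReal.ofReal (2⁻¹ * ‖p' t‖ ^ 2 + (V (p t) - c)) ≤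
      (Icc (0 : ℝ) 1).indicator (fun _ => ENNReal.ofReal (2⁻¹ * ‖ap - am‖ ^ 2 + K)) t := by
    intro t
    by_cases h : t ∈ Ioo s1 s2
    · have h01 : t ∈ Icc (0 : ℝ) 1 := ⟨hs1I.1.trans h.1.le, h.2.le.trans hs2I.2⟩
      rw [indicator_of_mem h01, hmid t (Ioo_subset_Icc_self h)]
      apply ENNReal.ofReal_le_ofReal
      have h3 : p' t = ap - am := indicator_of_mem h _
      have := hK t h01
      rw [h3]
      simp only [hl]
      linarith
    · have h3 : p' t = 0 := indicator_of_notMem h _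
      have h4 : V (p t) ≤ c := by
        by_cases h5 : t ≤ s1
        · rw [hlo t h5]; exact hV1
        · rw [hhi t (by by_contra h6; exact h ⟨not_le.1 h5, not_le.1 h6⟩)]; exact hV2
      rw [ENNReal.ofReal_of_nonpos]
      · exact zero_le
      · rw [h3]; simp; exact h4
  calc lagJ V c p p' univ ≤ ∫⁻ t, (Icc (0 : ℝ) 1).indicator
        (fun _ => ENNReal.ofReal (2⁻¹ * ‖ap - am‖ ^ 2 + K)) t := by
        unfold lagJ
        rw [Measure.restrict_univ]
        exact lintegral_mono hbound
    _ = _ := by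
        rw [lintegral_indicator measurableSet_Icc]
        simp

/-- Lemma 3.1 (uniform bound for double-well systems): there is `R_dw > 0` bounding
uniformly in `c ∈ [0, c_dw)` every connecting solution with energy `−c` whose action on its
connecting time interval equals `m_c`. -/
theorem doublewell_uniform_bound {N : ℕ} (hN : 0 < N) (V : Euc N → ℝ) (hV : ContDiff ℝ 1 V)
    (am ap : Euc N) (hne : am ≠ ap) (hVam : V am = 0) (hVap : V ap = 0)
    (hVpos : ∀ x, x ≠ am → x ≠ ap → 0 < V x)
    (ν₀ : ℝ) (hν₀ : 0 < ν₀)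
    (hliminf₁ : ∀ b : ℝ, b < ν₀ → ∃ ρ : ℝ, ∀ x : Euc N, ρ ≤ ‖x‖ → b < V x)
    (hliminf₂ : ∀ b : ℝ, ν₀ < b → ∀ ρ : ℝ, ∃ x : Euc N, ρ ≤ ‖x‖ ∧ V x < b)
    (cdw : ℝ) (hcdw0 : 0 < cdw) (hcdwν : cdw < ν₀)
    (Vm Vp : ℝ → Set (Euc N))
    (hsets : ∀ c : ℝ, 0 ≤ c → c < cdw →
      IsCompact (Vm c) ∧ IsCompact (Vp c) ∧
      {x | V x ≤ c} = Vm c ∪ Vp c ∧ 0 < setDist (Vm c) (Vp c) ∧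
      am ∈ Vm c ∧ Vm c ⊆ ball am (dist am ap / 4) ∧
      ap ∈ Vp c ∧ Vp c ⊆ ball ap (dist am ap / 4)) :
    ∃ Rdw > (0 : ℝ), ∀ c : ℝ, 0 ≤ c → c < cdw →
      ∀ q : ℝ → Euc N, ContDiff ℝ 2 q →
        (∀ t, deriv (deriv q) t = gradient V (q t)) →
        (∀ t, 2⁻¹ * ‖deriv q t‖ ^ 2 - V (q t) = -c) →
        ∀ α ω : EReal, α < ω →
          (∀ t : ℝ, α < (t : EReal) → (t : EReal) < ω → c < V (q t)) →
          ((α = ⊥ → Tendsto (fun t => infDist (q t) (Vm c)) atBot (𝓝 0)) ∧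
           (∀ a : ℝ, α = (a : EReal) →
              Tendsto (fun t => infDist (q t) (Vm c)) (𝓝[>] a) (𝓝 0))) →
          ((ω = ⊤ → Tendsto (fun t => infDist (q t) (Vp c)) atTop (𝓝 0)) ∧
           (∀ b : ℝ, ω = (b : EReal) →
              Tendsto (fun t => infDist (q t) (Vp c)) (𝓝[<] b) (𝓝 0))) →
          lagJ V c q (deriv q) {t : ℝ | α < (t : EReal) ∧ (t : EReal) < ω}
            = mc V c (Vm c) (Vp c) →
          (∀ M : ℝ, (∀ t : ℝ, α < (t : EReal) → (t : EReal) < ω → ‖q t‖ ≤ M) →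
            ∀ t : ℝ, ‖q t‖ ≤ M) →
          ∀ t : ℝ, ‖q t‖ ≤ Rdw := by
  have hVc : Continuous V := hV.continuous
  obtain ⟨K, hK⟩ : ∃ K, ∀ s ∈ Icc (0 : ℝ) 1, V (am + s • (ap - am)) ≤ K := by
    have : ContinuousOn (fun s : ℝ => V (am + s • (ap - am))) (Icc 0 1) :=
      (hVc.comp (by fun_prop)).continuousOn
    obtain ⟨K, hK⟩ := (isCompact_Icc (a := (0 : ℝ)) (b := 1)).bddAbove_image this
    exact ⟨K, fun s hs => hK (mem_image_of_mem _ hs)⟩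
  have hK0 : 0 ≤ K := by
    have := hK 0 (by simp)
    simpa [hVam] using this
  obtain ⟨ρ, hρ⟩ := hliminf₁ ((cdw + ν₀) / 2) (by linarith)
  set M : ℝ := 2⁻¹ * ‖ap - am‖ ^ 2 + K with hMdef
  have hM0 : 0 ≤ M := by positivity
  set h : ℝ := (ν₀ - cdw) / 2 with hh
  have hh0 : 0 < h := by rw [hh]; linarith
  set k : ℝ := Real.sqrt (2 * h) with hk
  have hk0 : 0 < k := Real.sqrt_pos.2 (by linarith)
  have hk2 : k ^ 2 = 2 * h := Real.sq_sqrt (by linarith)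
  set R0 : ℝ := max ρ (‖am‖ + dist am ap / 4 + 1) with hR0
  have hR0pos : 0 < R0 := lt_max_of_lt_right (by positivity)
  refine ⟨R0 + M / k, by positivity, ?_⟩
  intro c hc0 hc q hq _ _ α ω hαω hin hα _ hJ hsup
  obtain ⟨hm, hp, hu, -, ham, hmb, hap, hpb⟩ := hsets c hc0 hc
  have hmc := dw_mc_le V hVc am ap hne c hc0 (Vm c) (Vp c) hm hp hu ham hmb hap hpb K hK0 hK
  rw [← hJ] at hmc
  apply hsup
  -- a starting time close to `Vm c`
  obtain ⟨t0, h0α, h0ω, h0⟩ : ∃ t0 : ℝ, α < (t0 : EReal) ∧ (t0 : EReal) < ω ∧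
      infDist (q t0) (Vm c) < 1 := by
    obtain ⟨r, hr1, hr2⟩ := EReal.lt_iff_exists_real_btwn.1 hαω
    induction α with
    | bot =>
      obtain ⟨t, ht1, ht2⟩ := (((hα.1 rfl).eventually (gt_mem_nhds one_pos)).and
        (eventually_le_atBot r)).exists
      exact ⟨t, EReal.bot_lt_coe t, lt_of_le_of_lt (EReal.coe_le_coe_iff.2 ht2) hr2, ht1⟩
    | coe a =>
      have har : a < r := EReal.coe_lt_coe_iff.1 hr1
      obtain ⟨t, ht1, ht2⟩ := (((hα.2 a rfl).eventually (gt_mem_nhds one_pos)).and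
        (Ioo_mem_nhdsGT har)).exists
      exact ⟨t, EReal.coe_lt_coe_iff.2 ht2.1, (EReal.coe_lt_coe_iff.2 ht2.2).trans hr2, ht1⟩
    | top => exact absurd hαω not_top_lt
  have hq0 : ‖q t0‖ ≤ R0 := by
    obtain ⟨y, hy, hyd⟩ := (infDist_lt_iff ⟨am, ham⟩).1 h0
    have h1 := mem_ball.1 (hmb hy)
    have h2 : dist (q t0) am ≤ dist (q t0) y + dist y am := dist_triangle _ _ _
    have h3 : ‖q t0‖ ≤ ‖am‖ + dist (q t0) am := by
      rw [dist_eq_norm]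
      simpa using norm_add_le am (q t0 - am)
    have := le_max_right ρ (‖am‖ + dist am ap / 4 + 1)
    linarith
  intro t htα htω
  have hqc : Continuous q := hq.continuous
  have hcomp : IsCompact {s | s ∈ uIcc t0 t ∧ ‖q s‖ ≤ R0} :=
    isCompact_uIcc.inter_right (isClosed_le hqc.norm continuous_const)
  obtain ⟨s, ⟨hsI, hsR⟩, hsmin⟩ := hcomp.exists_isMinOn ⟨t0, left_mem_uIcc, hq0⟩
    (f := fun s => |s - t|) (by fun_prop)
  have hsmin' : ∀ x ∈ uIcc t0 t, |x - t| < |s - t| → R0 < ‖q x‖ := by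
    intro x hx hlt
    by_contra hcon
    have h3 := hsmin (show x ∈ _ from ⟨hx, not_lt.1 hcon⟩)
    simp only [mem_ofPred_eq] at h3
    linarith
  have hsub : ∀ x ∈ uIcc t0 t, α < (x : EReal) ∧ (x : EReal) < ω := by
    intro x hx
    rcases mem_uIcc.1 hx with hx | hx
    · exact ⟨h0α.trans_le (EReal.coe_le_coe_iff.2 hx.1),
        (EReal.coe_le_coe_iff.2 hx.2).trans_lt htω⟩
    · exact ⟨htα.trans_le (EReal.coe_le_coe_iff.2 hx.1),
        (EReal.coe_le_coe_iff.2 hx.2).trans_lt h0ω⟩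
  have hptw : ∀ x, R0 < ‖q x‖ →
      k * ‖deriv q x‖ ≤ 2⁻¹ * ‖deriv q x‖ ^ 2 + (V (q x) - c) := by
    intro x hx
    have h1 := hρ (q x) ((le_max_left _ _).trans hx.le)
    have h2 : h ≤ V (q x) - c := by rw [hh]; linarith
    nlinarith [sq_nonneg (‖deriv q x‖ - k)]
  have hlint : ∀ a b : ℝ, Ioo a b ⊆ uIcc t0 t →
      ∫⁻ x in Ioo a b, ENNReal.ofReal (2⁻¹ * ‖deriv q x‖ ^ 2 + (V (q x) - c))
        ≤ ENNReal.ofReal M := by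
    intro a b hab
    exact (lintegral_mono_set fun x hx => hsub x (hab hx)).trans hmc
  have key : k * ‖q t - q s‖ ≤ M := by
    rcases le_total s t with hst | hst
    · have hI : Ioo s t ⊆ uIcc t0 t := fun x hx =>
        uIcc_subset_uIcc hsI right_mem_uIcc (Icc_subset_uIcc (Ioo_subset_Icc_self hx))
      refine dw_travel q hq k M hk0.le hM0 _ s t hst (fun x hx => hptw x ?_) (hlint s t hI)
      apply hsmin' x (hI hx)
      rw [abs_of_neg (by linarith [hx.2]), abs_of_nonpos (by linarith)]
      linarith [hx.1]
    · rw [norm_sub_rev]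
      have hI : Ioo t s ⊆ uIcc t0 t := fun x hx =>
        uIcc_subset_uIcc right_mem_uIcc hsI (Icc_subset_uIcc (Ioo_subset_Icc_self hx))
      refine dw_travel q hq k M hk0.le hM0 _ t s hst (fun x hx => hptw x ?_) (hlint t s hI)
      apply hsmin' x (hI hx)
      rw [abs_of_pos (by linarith [hx.1]), abs_of_nonneg (by linarith)]
      linarith [hx.2]
  have h5 : ‖q t - q s‖ ≤ M / k := by
    rw [le_div_iff₀ hk0]; linarith
  have h6 : ‖q t‖ ≤ ‖q s‖ + ‖q t - q s‖ := by
    simpa using norm_add_le (q s) (q t - q s)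
  linarith
end
end
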